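/- arXiv:0906.2857 — 7 statements merged into one kernel-verified Lean document; each statement's English description precedes it below -/
import Mathlib

section
/- Let p be a prime and let (M, φ, N) be a (φ,N)-module over ℚ_p such that φ is semisimple at 1 and at p⁻¹, and let D ⊆ M be a (φ,N)-submodule. Define D₋₂ = 0, D₋₁ = (1 − p⁻¹φ⁻¹)(D) + N(D^{φ=1}), D₀ = D, D₁ = D + (M^{φ=1} ∩ N⁻¹(D^{φ=p⁻¹})), D₂ = M. Then: (a) each D_i is a (φ,N)-submodule of M and D₋₂ ⊆ D₋₁ ⊆ D₀ ⊆ D₁ ⊆ D₂; (b) D₋₁ = (1 − p⁻¹φ⁻¹)(D₋₁) + N(D₋₁); (c) no nonzero element of the quotient M/D₁ is simultaneously fixed by the induced automorphism φ̄ and killed by the induced endomorphism N̄ (i.e. (M/D₁)^{φ̄=1} ∩ ker N̄ = 0); (d) the induced φ on D₀/D₋₁ satisfies (D₀/D₋₁)^{φ̄=p⁻¹} = D₀/D₋₁ and the induced φ on D₁/D₀ satisfies (D₁/D₀)^{φ̄=1} = D₁/D₀. (This is the existence part of Lemma 2.1.5(i): the explicit filtration satisfies conditions D1–D3.) -/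
/-!
Both semisimplicity hypotheses enter through `exists_ker_add_apply_apply`: for `c = 1` and
`c = p⁻¹`, every `d ∈ D` is `k + (φ - c)² b` with `k ∈ D^{φ=c}` and `b ∈ D`.

Writing `T = 1 - p⁻¹φ⁻¹ = (φ - p⁻¹) ∘ φ⁻¹`, one has `T(D) = (φ - p⁻¹)(D)`, which gives (d) for
`D₀/D₋₁`. Since `N ∘ (φ - 1) = p (φ - p⁻¹) ∘ N`, the splitting at `c = 1` gives `N(D) ⊆ D₋₁`, so
`D₋₁` is stable under `φ` and `N`. The splitting at `c = p⁻¹` gives `T(D) = T(T(D))`, and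
`D^{φ=1} ⊆ T(D)` because `T` acts on it by `1 - p⁻¹ ≠ 0`; together these give (b).
The operators `φ - 1` and `N` map `D₁` into `D`; if `φ x - x` and `N x` lie in `D₁`, the splitting
at `c = 1` changes `x` by an element of `D` into a fixed vector `e`, and `N e ∈ D₁` is an
eigenvector of eigenvalue `p⁻¹ ≠ 1`, so it lies in `D`, which is (c).
-/

/-!
Statement 0 (Benois, Lemma 2.1.5(i), existence part).

Let `p` be a prime and `(M, φ, N)` a `(φ,N)`-module over `ℚ_p` (a finite-dimensional
`ℚ_p`-vector space with a linear automorphism `φ`, a nilpotent `N`, and `N φ = p φ N`)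
such that `φ` is semisimple at `1` and at `p⁻¹`, and let `D ⊆ M` be a `(φ,N)`-submodule.
Define `D₋₂ = 0`, `D₋₁ = (1 − p⁻¹φ⁻¹)(D) + N(D^{φ=1})`, `D₀ = D`,
`D₁ = D + (M^{φ=1} ∩ N⁻¹(D^{φ=p⁻¹}))`, `D₂ = M`.  Then:
(a) each `D_i` is a `(φ,N)`-submodule and `0 ⊆ D₋₁ ⊆ D₀ ⊆ D₁ ⊆ M`;
(b) `D₋₁ = (1 − p⁻¹φ⁻¹)(D₋₁) + N(D₋₁)`;
(c) `(M/D₁)^{φ̄=1} ∩ ker N̄ = 0`, expressed elementwise;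
(d) the induced `φ` acts as `p⁻¹` on `D₀/D₋₁` and as `1` on `D₁/D₀`, expressed elementwise.
-/

open LinearMap Submodule

section

variable (p : ℕ) [Fact p.Prime]
variable {M : Type*} [AddCommGroup M] [Module ℚ_[p] M]

/-- The eigenspace `M^{φ=λ} = ker (φ - λ·id)`. -/
noncomputable def eigSp (φ : M →ₗ[ℚ_[p]] M) (lam : ℚ_[p]) : Submodule ℚ_[p] M :=
  LinearMap.ker (φ - lam • LinearMap.id)

/-- `φ` is semisimple at `λ` if `ker ((φ - λ·id)²) = ker (φ - λ·id)`. -/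
def SemisimpleAt (φ : M →ₗ[ℚ_[p]] M) (lam : ℚ_[p]) : Prop :=
  LinearMap.ker ((φ - lam • LinearMap.id) ^ 2) = LinearMap.ker (φ - lam • LinearMap.id)

/-- `D₋₁ = (1 − p⁻¹φ⁻¹)(D) + N(D^{φ=1})`. -/
noncomputable def Dminus (φ : M ≃ₗ[ℚ_[p]] M) (N : M →ₗ[ℚ_[p]] M)
    (D : Submodule ℚ_[p] M) : Submodule ℚ_[p] M :=
  D.map (LinearMap.id - (p : ℚ_[p])⁻¹ • φ.symm.toLinearMap) ⊔
    (D ⊓ eigSp p φ.toLinearMap 1).map N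

/-- `D₁ = D + (M^{φ=1} ∩ N⁻¹(D^{φ=p⁻¹}))`. -/
noncomputable def Dplus (φ : M ≃ₗ[ℚ_[p]] M) (N : M →ₗ[ℚ_[p]] M)
    (D : Submodule ℚ_[p] M) : Submodule ℚ_[p] M :=
  D ⊔ (eigSp p φ.toLinearMap 1 ⊓
    (D ⊓ eigSp p φ.toLinearMap (p : ℚ_[p])⁻¹).comap N)

/-- Fitting decomposition at the first step: if `ker g² = ker g`, then on a finite-dimensional
`g`-stable subspace `D` one has `D = (ker g ∩ D) + g(D)` and `g(D) = g²(D)`. -/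
theorem exists_ker_add_apply_apply {K V : Type*} [Field K] [AddCommGroup V] [Module K V]
    [FiniteDimensional K V] (g : V →ₗ[K] V) (hg : ∀ x, g (g x) = 0 → g x = 0)
    (D : Submodule K V) (hD : ∀ x ∈ D, g x ∈ D) (d : V) (hd : d ∈ D) :
    ∃ k ∈ D, ∃ b ∈ D, g k = 0 ∧ d = k + g (g b) := by
  set h : D →ₗ[K] D := g.restrict hD with hh
  have hv : ∀ x : D, ((h x : D) : V) = g x := fun x => rfl
  have hker : LinearMap.ker (h ∘ₗ h) = LinearMap.ker h := by
    ext x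
    simp only [LinearMap.mem_ker, LinearMap.comp_apply, ← Subtype.coe_inj, hv,
      ZeroMemClass.coe_zero]
    exact ⟨hg _, fun hx => by rw [hx, map_zero]⟩
  have hrange : LinearMap.range (h ∘ₗ h) = LinearMap.range h := by
    apply Submodule.eq_of_le_of_finrank_eq (LinearMap.range_comp_le_range h h)
    have h1 := LinearMap.finrank_range_add_finrank_ker (h ∘ₗ h)
    have h2 := LinearMap.finrank_range_add_finrank_ker h
    rw [hker] at h1
    omega
  have key : ∀ x : D, ∃ y : D, h (h y) = h x := fun x => by
    have : h x ∈ LinearMap.range (h ∘ₗ h) := hrange ▸ LinearMap.mem_range_self h x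
    exact this
  obtain ⟨y, hy⟩ := key ⟨d, hd⟩
  obtain ⟨z, hz⟩ := key y
  refine ⟨d - g (g z), D.sub_mem hd (hD _ (hD _ z.2)), z, z.2, ?_, by abel⟩
  have hy' : g (g y) = g d := congrArg Subtype.val hy
  have hz' : g (g z) = g y := congrArg Subtype.val hz
  rw [map_sub, hz', hy', sub_self]

theorem benois_filtration_exists
    [FiniteDimensional ℚ_[p] M]
    (φ : M ≃ₗ[ℚ_[p]] M) (N : M →ₗ[ℚ_[p]] M)
    (hNnilp : IsNilpotent N)
    (hrel : N ∘ₗ φ.toLinearMap = (p : ℚ_[p]) • (φ.toLinearMap ∘ₗ N))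
    (hss1 : SemisimpleAt p φ.toLinearMap 1)
    (hssp : SemisimpleAt p φ.toLinearMap (p : ℚ_[p])⁻¹)
    (D : Submodule ℚ_[p] M)
    (hDφ : D.map φ.toLinearMap ≤ D) (hDN : D.map N ≤ D) :
    -- (a) the `D_i` are `(φ,N)`-submodules forming an increasing filtration
    ((Dminus p φ N D).map φ.toLinearMap ≤ Dminus p φ N D ∧
     (Dminus p φ N D).map N ≤ Dminus p φ N D ∧
     (Dplus p φ N D).map φ.toLinearMap ≤ Dplus p φ N D ∧
     (Dplus p φ N D).map N ≤ Dplus p φ N D ∧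
     (⊥ : Submodule ℚ_[p] M) ≤ Dminus p φ N D ∧
     Dminus p φ N D ≤ D ∧ D ≤ Dplus p φ N D ∧ Dplus p φ N D ≤ (⊤ : Submodule ℚ_[p] M)) ∧
    -- (b) `D₋₁ = (1 − p⁻¹φ⁻¹)(D₋₁) + N(D₋₁)`
    (Dminus p φ N D =
      (Dminus p φ N D).map (LinearMap.id - (p : ℚ_[p])⁻¹ • φ.symm.toLinearMap) ⊔
        (Dminus p φ N D).map N) ∧
    -- (c) `(M/D₁)^{φ̄=1} ∩ ker N̄ = 0`
    (∀ x : M, φ x - x ∈ Dplus p φ N D → N x ∈ Dplus p φ N D → x ∈ Dplus p φ N D) ∧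
    -- (d) `(D₀/D₋₁)^{φ̄=p⁻¹} = D₀/D₋₁` and `(D₁/D₀)^{φ̄=1} = D₁/D₀`
    (∀ x ∈ D, φ x - (p : ℚ_[p])⁻¹ • x ∈ Dminus p φ N D) ∧
    (∀ x ∈ Dplus p φ N D, φ x - x ∈ D) := by
  have hp : (p : ℚ_[p]) ≠ 0 := by exact_mod_cast (Fact.out : p.Prime).ne_zero
  have hp1 : (p : ℚ_[p])⁻¹ - 1 ≠ 0 := by
    rw [sub_ne_zero, Ne, inv_eq_one]
    exact_mod_cast (Fact.out : p.Prime).ne_one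
  have hNφ : ∀ x, N (φ x) = (p : ℚ_[p]) • φ (N x) := fun x => LinearMap.congr_fun hrel x
  have hφD : ∀ x ∈ D, φ x ∈ D := fun x hx => hDφ ⟨x, hx, rfl⟩
  have hND : ∀ x ∈ D, N x ∈ D := fun x hx => hDN ⟨x, hx, rfl⟩
  have hmapeq : D.map φ.toLinearMap = D :=
    Submodule.eq_of_le_of_finrank_eq hDφ (LinearEquiv.finrank_map_eq φ D)
  have hsymmD : ∀ x ∈ D, φ.symm x ∈ D := fun x hx => by
    rw [← hmapeq] at hx
    obtain ⟨y, hy, rfl⟩ := hx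
    simpa using hy
  have heig : ∀ (c : ℚ_[p]) (x : M), x ∈ eigSp p φ.toLinearMap c ↔ φ x = c • x := fun c x => by
    simp [eigSp, LinearMap.mem_ker, sub_eq_zero]
  have hNeig : ∀ x, φ x = x → φ (N x) = (p : ℚ_[p])⁻¹ • N x := fun x hx => by
    have h := hNφ x
    rw [hx] at h
    exact (inv_smul_eq_iff₀ hp).2 h |>.symm
  -- Semisimplicity at `c` splits `D` into `D^{φ=c}` and `(φ - c)²(D)`.
  have hdec : ∀ c : ℚ_[p], SemisimpleAt p φ.toLinearMap c → ∀ d ∈ D, ∃ k ∈ D, ∃ b ∈ D,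
      φ k = c • k ∧ d = k + (φ (φ b - c • b) - c • (φ b - c • b)) := by
    intro c hc d hd
    obtain ⟨k, hk, b, hb, h1, h2⟩ := exists_ker_add_apply_apply
      (φ.toLinearMap - c • LinearMap.id)
      (fun x hx => by
        have : x ∈ LinearMap.ker ((φ.toLinearMap - c • LinearMap.id) ^ 2) := by
          rw [LinearMap.mem_ker, pow_two]; exact hx
        rw [hc] at this
        exact this) D
      (fun x hx => D.sub_mem (hφD x hx) (D.smul_mem c hx)) d hd
    exact ⟨k, hk, b, hb, (heig c k).1 h1, h2⟩
  have hker1 : ∀ x, φ (φ x - x) = φ x - x → φ x = x := fun x hx => by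
    have h2 : x ∈ LinearMap.ker ((φ.toLinearMap - (1 : ℚ_[p]) • LinearMap.id) ^ 2) := by
      rw [LinearMap.mem_ker, pow_two]
      change φ (φ x - (1 : ℚ_[p]) • x) - (1 : ℚ_[p]) • (φ x - (1 : ℚ_[p]) • x) = 0
      rw [one_smul, one_smul, hx, sub_self]
    rw [hss1] at h2
    simpa using (heig 1 x).1 h2
  set T : M →ₗ[ℚ_[p]] M := LinearMap.id - (p : ℚ_[p])⁻¹ • φ.symm.toLinearMap with hTdef
  have hT : ∀ x, T x = x - (p : ℚ_[p])⁻¹ • φ.symm x := fun x => rfl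
  have hTφ : ∀ x, T (φ x) = φ x - (p : ℚ_[p])⁻¹ • x := fun x => by
    rw [hT, LinearEquiv.symm_apply_apply]
  have hTD : ∀ x ∈ D, T x ∈ D := fun x hx =>
    D.sub_mem hx (D.smul_mem _ (hsymmD x hx))
  have hTm : ∀ x ∈ D, T x ∈ Dminus p φ N D := fun x hx =>
    Submodule.mem_sup_left ⟨x, hx, rfl⟩
  have hd1 : ∀ x ∈ D, φ x - (p : ℚ_[p])⁻¹ • x ∈ Dminus p φ N D := fun x hx => by
    rw [← hTφ]
    exact hTm _ (hφD x hx)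
  have hminD : Dminus p φ N D ≤ D := by
    refine sup_le ?_ ?_
    · rintro _ ⟨x, hx, rfl⟩
      exact hTD x hx
    · rintro _ ⟨x, hx, rfl⟩
      exact hND x hx.1
  have hDplus : D ≤ Dplus p φ N D := le_sup_left
  have hd2 : ∀ x ∈ Dplus p φ N D, φ x - x ∈ D := fun x hx => by
    obtain ⟨a, ha, e, he, rfl⟩ := Submodule.mem_sup.1 hx
    have h1 : φ e = e := by simpa using (heig 1 e).1 he.1
    rw [map_add, h1, add_sub_add_right_eq_sub]
    exact D.sub_mem (hφD a ha) ha
  -- `N ∘ (φ - 1) = p (φ - p⁻¹) ∘ N`, so on `D = D^{φ=1} + (φ - 1)(D)` the image of `N` lies in `D₋₁`.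
  have hNm : ∀ x ∈ D, N x ∈ Dminus p φ N D := fun x hx => by
    obtain ⟨k, hk, b, hb, h1, h2⟩ := hdec 1 hss1 x hx
    simp only [one_smul] at h2
    rw [h2, map_add]
    refine Submodule.add_mem _ (Submodule.mem_sup_right ⟨k, ⟨hk, (heig 1 k).2 h1⟩, rfl⟩) ?_
    set c := φ b - b with hc
    have hcD : c ∈ D := D.sub_mem (hφD b hb) hb
    have : N (φ c - c) = (p : ℚ_[p]) • (φ (N c) - (p : ℚ_[p])⁻¹ • N c) := by
      rw [map_sub, hNφ, smul_sub, smul_inv_smul₀ hp]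
    rw [this]
    exact Submodule.smul_mem _ _ (hd1 _ (hND c hcD))
  have hNplus : ∀ x ∈ Dplus p φ N D, N x ∈ D := fun x hx => by
    obtain ⟨a, ha, e, he, rfl⟩ := Submodule.mem_sup.1 hx
    rw [map_add]
    exact D.add_mem (hND a ha) he.2.1
  refine ⟨⟨?_, ?_, ?_, ?_, bot_le, hminD, hDplus, le_top⟩, ?_, ?_, hd1, hd2⟩
  · rintro _ ⟨x, hx, rfl⟩
    have := Submodule.add_mem _ (hd1 x (hminD hx)) (Submodule.smul_mem _ (p : ℚ_[p])⁻¹ hx)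
    rwa [sub_add_cancel] at this
  · rintro _ ⟨x, hx, rfl⟩
    exact hNm x (hminD hx)
  · rintro _ ⟨x, hx, rfl⟩
    have := Submodule.add_mem _ (hDplus (hd2 x hx)) hx
    rwa [sub_add_cancel] at this
  · rintro _ ⟨x, hx, rfl⟩
    exact hDplus (hNplus x hx)
  · apply le_antisymm
    · refine sup_le ?_ ?_
      · -- `T = (φ - p⁻¹) ∘ φ⁻¹` kills `D^{φ=p⁻¹}`, whose complement in `D` is contained in `T(D)`.
        rintro _ ⟨x, hx, rfl⟩
        obtain ⟨k, hk, b, hb, h1, h2⟩ := hdec _ hssp x hx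
        have hTk : T k = 0 := by
          have h3 : φ.symm k = (p : ℚ_[p]) • k := by
            rw [LinearEquiv.symm_apply_eq, map_smul, h1, smul_inv_smul₀ hp]
          rw [hT, h3, inv_smul_smul₀ hp, sub_self]
        refine Submodule.mem_sup_left ⟨_, hd1 (φ b - (p : ℚ_[p])⁻¹ • b)
          (D.sub_mem (hφD b hb) (D.smul_mem _ hb)), ?_⟩
        conv_rhs => rw [h2, map_add, hTk, zero_add]
      · -- A fixed vector `x` of `φ` is a multiple of `T x = (1 - p⁻¹) x`, hence lies in `D₋₁`.
        rintro _ ⟨x, ⟨hxD, hx⟩, rfl⟩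
        have h1 : φ x = x := by simpa using (heig 1 x).1 hx
        refine Submodule.mem_sup_right ⟨x, ?_, rfl⟩
        have h3 := hd1 x hxD
        have h4 : φ x - (p : ℚ_[p])⁻¹ • x = (-((p : ℚ_[p])⁻¹ - 1)) • x := by
          rw [h1]; module
        rw [h4] at h3
        exact (Submodule.smul_mem_iff _ (neg_ne_zero.2 hp1)).1 h3
    · refine sup_le ?_ ?_
      · rintro _ ⟨x, hx, rfl⟩
        exact hTm x (hminD hx)
      · rintro _ ⟨x, hx, rfl⟩
        exact hNm x (hminD hx)
  · intro x hx hNx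
    -- `(φ - 1)² x ∈ D` is `k + (φ - 1)² b` with `φ k = k`, so `x - b` is killed by `(φ - 1)³`,
    -- and is therefore fixed by `φ`.
    obtain ⟨k, hk, b, hb, h1, h2⟩ := hdec 1 hss1 _ (hd2 _ hx)
    simp only [one_smul] at h1 h2
    have he : φ (x - b) = x - b := by
      apply hker1
      apply hker1
      have h3 : φ (φ (x - b) - (x - b)) - (φ (x - b) - (x - b)) = k := by
        have h4 : φ (φ (x - b) - (x - b)) - (φ (x - b) - (x - b)) =
            (φ (φ x - x) - (φ x - x)) - (φ (φ b - b) - (φ b - b)) := by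
          simp only [map_sub]; abel
        rw [h4, h2, add_sub_cancel_right]
      rw [h3, h1]
    have hNe : φ (N (x - b)) = (p : ℚ_[p])⁻¹ • N (x - b) := hNeig _ he
    have hNe1 : N (x - b) ∈ Dplus p φ N D := by
      rw [map_sub]
      exact Submodule.sub_mem _ hNx (hDplus (hND b hb))
    -- `φ - 1` maps `D₁` into `D` and acts on `N (x - b)` as the nonzero scalar `p⁻¹ - 1`.
    have hNeD : N (x - b) ∈ D := by
      have h5 := hd2 _ hNe1
      have h6 : φ (N (x - b)) - N (x - b) = ((p : ℚ_[p])⁻¹ - 1) • N (x - b) := by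
        rw [hNe]; module
      rw [h6] at h5
      exact (Submodule.smul_mem_iff _ hp1).1 h5
    rw [← add_sub_cancel b x]
    refine Submodule.mem_sup.2 ⟨b, hb, x - b, ⟨?_, hNeD, (heig _ _).2 hNe⟩, rfl⟩
    exact (heig 1 _).2 (by rw [he, one_smul])

end
end

section
/- Let p be a prime and let (M, φ, N) be a (φ,N)-module over ℚ_p such that φ is semisimple at 1 and at p⁻¹, and let D ⊆ M be a (φ,N)-submodule. Suppose 0 = D'₋₂ ⊆ D'₋₁ ⊆ D'₀ ⊆ D'₁ ⊆ D'₂ = M is an increasing filtration by (φ,N)-submodules with D'₀ = D which satisfies: (i) no nonzero element of M/D'₁ is simultaneously fixed by the induced φ and killed by the induced N, and D'₋₁ = (1 − p⁻¹φ⁻¹)(D'₋₁) + N(D'₋₁); (ii) the induced φ on D'₀/D'₋₁ acts as p⁻¹ (i.e. (D'₀/D'₋₁)^{φ̄=p⁻¹} = D'₀/D'₋₁) and the induced φ on D'₁/D'₀ acts as 1 (i.e. (D'₁/D'₀)^{φ̄=1} = D'₁/D'₀). Then necessarily D'₋₁ = (1 − p⁻¹φ⁻¹)(D) + N(D^{φ=1})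 and D'₁ = D + (M^{φ=1} ∩ N⁻¹(D^{φ=p⁻¹})). (This is the uniqueness part of Lemma 2.1.5(i).) -/
/-!
Since `φ` is semisimple at `1`, every `φ`-stable subspace `S` splits as
`S = S^{φ=1} + (φ - 1) S` (`exists_fixed_add`); this is the only structural input.

For `D'₁`: splitting `x ∈ D'₁` leaves, modulo `(φ - 1) D'₁ ⊆ D`, a fixed vector `k`. As `N k` is a
`p⁻¹`-eigenvector of `D'₁`, and `φ` is the identity modulo `D`, `(p⁻¹ - 1) N k ∈ D`, so `N k ∈ D`.
The reverse inclusion is the vanishing of `(M/D'₁)^{φ=1, N=0}`.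

For `D'₋₁`: the formula `1 - p⁻¹φ⁻¹ = φ⁻¹(φ - p⁻¹)` and the action of `φ` on `D/D'₋₁` give one
inclusion, a fixed vector of `D` being in `D'₋₁` because `1 - p⁻¹ ≠ 0`. For the other, it suffices
to treat `N(D'₋₁)`; there `N(φ - 1) = p(φ - p⁻¹)N = p(1 - p⁻¹φ⁻¹)φN` deals with the part
`(φ - 1) D'₋₁` of the splitting.
-/

/-!
Statement 1 (Benois, Lemma 2.1.5(i), uniqueness part).

Let `p` be a prime and `(M, φ, N)` a `(φ,N)`-module over `ℚ_p` with `φ` semisimple at `1`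
and at `p⁻¹`, and `D ⊆ M` a `(φ,N)`-submodule.  If `0 = D'₋₂ ⊆ D'₋₁ ⊆ D'₀ ⊆ D'₁ ⊆ D'₂ = M`
is an increasing filtration by `(φ,N)`-submodules with `D'₀ = D` satisfying
(i) `(M/D'₁)^{φ̄=1} ∩ ker N̄ = 0` and `D'₋₁ = (1 − p⁻¹φ⁻¹)(D'₋₁) + N(D'₋₁)`,
(ii) the induced `φ` acts as `p⁻¹` on `D'₀/D'₋₁` and as `1` on `D'₁/D'₀`,
then `D'₋₁ = (1 − p⁻¹φ⁻¹)(D) + N(D^{φ=1})` and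
`D'₁ = D + (M^{φ=1} ∩ N⁻¹(D^{φ=p⁻¹}))`.
-/

open LinearMap Submodule

section

variable (p : ℕ) [Fact p.Prime]
variable {M : Type*} [AddCommGroup M] [Module ℚ_[p] M]

/-- Semisimplicity at `1` passes to a `φ`-stable subspace `S`, and finite dimension turns it into
the splitting `S = S^{φ=1} + (φ - 1) S`. -/
lemma exists_fixed_add [FiniteDimensional ℚ_[p] M] (φ : M →ₗ[ℚ_[p]] M)
    (hss : SemisimpleAt p φ 1) (S : Submodule ℚ_[p] M) (hS : S.map φ ≤ S) {x : M} (hx : x ∈ S) :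
    ∃ k ∈ S, ∃ y ∈ S, φ k = k ∧ x = k + (φ y - y) := by
  have hφS : ∀ z ∈ S, φ z ∈ S := fun z hz => hS (mem_map_of_mem hz)
  let f : S →ₗ[ℚ_[p]] S := φ.restrict hφS - LinearMap.id
  have hf : ∀ z : S, ((f z : S) : M) = φ z - z := fun z => rfl
  have hker : LinearMap.ker (f ∘ₗ f) = LinearMap.ker f := by
    ext z
    have h := SetLike.ext_iff.mp hss (z : M)
    simp only [LinearMap.mem_ker, pow_two, Module.End.mul_apply, LinearMap.sub_apply,
      LinearMap.id_apply, one_smul] at h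
    simp only [LinearMap.mem_ker, LinearMap.comp_apply, ← Submodule.coe_eq_zero, hf]
    exact h
  have hrange : LinearMap.range (f ∘ₗ f) = LinearMap.range f := by
    refine Submodule.eq_of_le_of_finrank_eq (LinearMap.range_comp_le_range f f) ?_
    have h₁ := (f ∘ₗ f).finrank_range_add_finrank_ker
    have h₂ := f.finrank_range_add_finrank_ker
    rw [hker] at h₁
    omega
  obtain ⟨y, hy⟩ : f ⟨x, hx⟩ ∈ LinearMap.range (f ∘ₗ f) :=
    hrange ▸ LinearMap.mem_range_self f _
  have hy' : φ (φ y - y) - (φ y - y) = φ x - x := congrArg Subtype.val hy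
  refine ⟨x - (φ y - y), S.sub_mem hx (S.sub_mem (hφS _ y.2) y.2), y, y.2, ?_, by abel⟩
  rw [map_sub, sub_eq_sub_iff_sub_eq_sub, ← hy']

theorem benois_filtration_unique
    [FiniteDimensional ℚ_[p] M]
    (φ : M ≃ₗ[ℚ_[p]] M) (N : M →ₗ[ℚ_[p]] M)
    (hNnilp : IsNilpotent N)
    (hrel : N ∘ₗ φ.toLinearMap = (p : ℚ_[p]) • (φ.toLinearMap ∘ₗ N))
    (hss1 : SemisimpleAt p φ.toLinearMap 1)
    (hssp : SemisimpleAt p φ.toLinearMap (p : ℚ_[p])⁻¹)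
    (D : Submodule ℚ_[p] M)
    (hDφ : D.map φ.toLinearMap ≤ D) (hDN : D.map N ≤ D)
    -- the filtration `D'₋₁ ⊆ D = D'₀ ⊆ D'₁` by `(φ,N)`-submodules
    (D'm D'p : Submodule ℚ_[p] M)
    (hD'mφ : D'm.map φ.toLinearMap ≤ D'm) (hD'mN : D'm.map N ≤ D'm)
    (hD'pφ : D'p.map φ.toLinearMap ≤ D'p) (hD'pN : D'p.map N ≤ D'p)
    (hchain₁ : D'm ≤ D) (hchain₂ : D ≤ D'p)
    -- (i) `(M/D'₁)^{φ̄=1,N̄=0} = 0` and `D'₋₁ = (1 − p⁻¹φ⁻¹)(D'₋₁) + N(D'₋₁)`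
    (hi₁ : ∀ x : M, φ x - x ∈ D'p → N x ∈ D'p → x ∈ D'p)
    (hi₂ : D'm = D'm.map (LinearMap.id - (p : ℚ_[p])⁻¹ • φ.symm.toLinearMap) ⊔ D'm.map N)
    -- (ii) `(D'₀/D'₋₁)^{φ̄=p⁻¹} = D'₀/D'₋₁` and `(D'₁/D'₀)^{φ̄=1} = D'₁/D'₀`
    (hii₁ : ∀ x ∈ D, φ x - (p : ℚ_[p])⁻¹ • x ∈ D'm)
    (hii₂ : ∀ x ∈ D'p, φ x - x ∈ D) :
    D'm = D.map (LinearMap.id - (p : ℚ_[p])⁻¹ • φ.symm.toLinearMap) ⊔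
      (D ⊓ eigSp p φ.toLinearMap 1).map N ∧
    D'p = D ⊔ (eigSp p φ.toLinearMap 1 ⊓
      (D ⊓ eigSp p φ.toLinearMap (p : ℚ_[p])⁻¹).comap N) := by
  have hp0 : (p : ℚ_[p]) ≠ 0 := Nat.cast_ne_zero.mpr (Fact.out : p.Prime).ne_zero
  have hp1 : (p : ℚ_[p])⁻¹ ≠ 1 := by
    rw [Ne, inv_eq_one]
    exact_mod_cast (Fact.out : p.Prime).ne_one
  have hNφ : ∀ x, N (φ x) = (p : ℚ_[p]) • φ (N x) := fun x => LinearMap.congr_fun hrel x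
  have mem_fix : ∀ x, x ∈ eigSp p φ.toLinearMap 1 ↔ φ x = x := fun x => by
    simp [eigSp, sub_eq_zero]
  have mem_inv : ∀ x, x ∈ eigSp p φ.toLinearMap (p : ℚ_[p])⁻¹ ↔ φ x = (p : ℚ_[p])⁻¹ • x :=
    fun x => by simp [eigSp, sub_eq_zero]
  have hN_fix : ∀ x, φ x = x → φ (N x) = (p : ℚ_[p])⁻¹ • N x := fun x hx => by
    rw [eq_inv_smul_iff₀ hp0, ← hNφ, hx]
  -- An injective endomorphism maps a finite-dimensional stable subspace onto itself.
  have hsymm : ∀ x, φ x ∈ D'm → x ∈ D'm := fun x hx => by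
    have h : D'm.map φ.toLinearMap = D'm :=
      Submodule.eq_of_le_of_finrank_eq hD'mφ (LinearEquiv.finrank_map_eq φ D'm)
    rw [← h] at hx
    obtain ⟨y, hy, hyx⟩ := hx
    exact φ.injective hyx ▸ hy
  constructor
  · apply le_antisymm
    · rw [hi₂]
      refine sup_le (le_sup_of_le_left (Submodule.map_mono hchain₁)) ?_
      rintro _ ⟨x, hx, rfl⟩
      obtain ⟨k, hk, y, hy, hφk, rfl⟩ := exists_fixed_add p φ.toLinearMap hss1 D'm hD'mφ hx
      rw [map_add, add_comm]
      refine Submodule.add_mem_sup ?_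
        (mem_map_of_mem ⟨hchain₁ hk, (mem_fix k).mpr hφk⟩)
      refine ⟨(p : ℚ_[p]) • φ (N y), D.smul_mem _ ?_, ?_⟩
      · exact hDφ (mem_map_of_mem (hDN (mem_map_of_mem (hchain₁ hy))))
      · simp [hNφ, smul_sub, smul_inv_smul₀ hp0]
    · refine sup_le ?_ ?_
      · rintro _ ⟨x, hx, rfl⟩
        apply hsymm
        simpa using hii₁ x hx
      · rintro _ ⟨x, ⟨hxD, hx⟩, rfl⟩
        refine hD'mN (mem_map_of_mem ?_)
        have h := hii₁ x hxD
        rw [(mem_fix x).mp hx] at h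
        have h' : (1 - (p : ℚ_[p])⁻¹) • x ∈ D'm := by rwa [sub_smul, one_smul]
        exact (D'm.smul_mem_iff (sub_ne_zero.mpr hp1.symm)).mp h'
  · apply le_antisymm
    · intro x hx
      obtain ⟨k, hk, y, hy, hφk, rfl⟩ := exists_fixed_add p φ.toLinearMap hss1 D'p hD'pφ hx
      rw [add_comm]
      refine Submodule.add_mem_sup (hii₂ y hy) ⟨(mem_fix k).mpr hφk, ?_, ?_⟩
      · have h := hii₂ (N k) (hD'pN (mem_map_of_mem hk))
        rw [hN_fix k hφk] at h
        have h' : ((p : ℚ_[p])⁻¹ - 1) • N k ∈ D := by rwa [sub_smul, one_smul]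
        exact (D.smul_mem_iff (sub_ne_zero.mpr hp1)).mp h'
      · exact (mem_inv _).mpr (hN_fix k hφk)
    · refine sup_le hchain₂ ?_
      rintro x ⟨hx, hNx, -⟩
      refine hi₁ x ?_ (hchain₂ hNx)
      rw [(mem_fix x).mp hx, sub_self]
      exact D'p.zero_mem

end
end

section
/- Let p be a prime and let (M, φ, N) be a (φ,N)-module over ℚ_p such that φ is semisimple at 1 and at p⁻¹, and let D ⊆ M be a (φ,N)-submodule, with associated filtration D₋₂ = 0, D₋₁ = (1 − p⁻¹φ⁻¹)(D) + N(D^{φ=1}), D₀ = D, D₁ = D + (M^{φ=1} ∩ N⁻¹(D^{φ=p⁻¹})), D₂ = M. Let M* = Hom_{ℚ_p}(M, ℚ_p) with φ*(f) = p⁻¹·(f ∘ φ⁻¹) and N*(f) = −(f ∘ N), and let D* ⊆ M* be the annihilator of D. Then: (a) (M*, φ*, N*) is a (φ,N)-module over ℚ_p and φ* is semisimple at 1 and at p⁻¹; (b) D* is a (φ*,N*)-submodule of M*; (c) the filtration associated to D* inside M* (i.e. D*₋₂ = 0, D*₋₁ = (1 − p⁻¹(φ*)⁻¹)(D*) + N*((D*)^{φ*=1}),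 D*₀ = D*, D*₁ = D* + ((M*)^{φ*=1} ∩ (N*)⁻¹((D*)^{φ*=p⁻¹})), D*₂ = M*) satisfies D*_i = annihilator of D₋ᵢ in M*, for every i ∈ {−2, −1, 0, 1, 2}. (Lemma 2.1.5(ii).) -/
/-!
The proof first rewrites the two non-trivial steps of the filtration without eigenspaces.  If `φ` is
semisimple at `1` and `D` is stable under `φ` and `N`, then

* `D₋₁ = (1 − p⁻¹φ⁻¹)(D) + N(D)` (`Dminus_eq`), because `D = D^{φ=1} + (φ − 1)(D)` and
  `N(φ − 1) = (pφ − 1)N` maps `D` into `(pφ − 1)(D) = (1 − p⁻¹φ⁻¹)(D)`;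
* `D₁ = {x | (φ − 1)x ∈ D and N x ∈ D}` (`Dplus_eq`), because semisimplicity allows one to
  correct such an `x` by an element of `D` so as to be fixed by `φ`.

In this form the two steps are visibly exchanged by duality: annihilators turn images into preimages
under the transpose, and conversely, while the transpose of `φ − 1` is, up to sign,
`1 − p⁻¹(φ*)⁻¹`, and the transpose of `1 − p⁻¹φ⁻¹` is, up to sign, `φ* − 1`.
Finally `φ*` is semisimple at `λ` when `φ` is semisimple at `(pλ)⁻¹`
(`semisimpleAt_phiStar`), which exchanges the eigenvalues `1` and `p⁻¹`.
-/

/-!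
Statement 2 (Benois, Lemma 2.1.5(ii)).

Let `(M, φ, N)` be a `(φ,N)`-module over `ℚ_p` with `φ` semisimple at `1` and `p⁻¹`, let
`D ⊆ M` be a `(φ,N)`-submodule, with associated filtration `D₋₂ = 0`,
`D₋₁ = (1 − p⁻¹φ⁻¹)(D) + N(D^{φ=1})`, `D₀ = D`, `D₁ = D + (M^{φ=1} ∩ N⁻¹(D^{φ=p⁻¹}))`,
`D₂ = M`.  Let `M* = Hom(M, ℚ_p)` with `φ*(f) = p⁻¹·(f ∘ φ⁻¹)`, `N*(f) = −(f ∘ N)`, and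
`D* ⊆ M*` the annihilator of `D`.  Then (a) `(M*, φ*, N*)` is a `(φ,N)`-module with `φ*`
semisimple at `1` and `p⁻¹`; (b) `D*` is a `(φ*,N*)`-submodule; (c) the filtration
associated to `D*` satisfies `D*_i = ` annihilator of `D₋ᵢ`, for `i ∈ {−2,−1,0,1,2}`.
-/

open LinearMap Submodule

section

variable (p : ℕ) [Fact p.Prime]
variable {M : Type*} [AddCommGroup M] [Module ℚ_[p] M]

/-- The dual automorphism `φ* : f ↦ p⁻¹ · (f ∘ φ⁻¹)` of `M* = Hom(M, ℚ_p)`. -/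
noncomputable def phiStar (φ : M ≃ₗ[ℚ_[p]] M) :
    Module.Dual ℚ_[p] M ≃ₗ[ℚ_[p]] Module.Dual ℚ_[p] M :=
  φ.symm.dualMap.trans (LinearEquiv.smulOfNeZero ℚ_[p] (Module.Dual ℚ_[p] M)
    ((p : ℚ_[p])⁻¹)
    (inv_ne_zero (Nat.cast_ne_zero.mpr (Fact.out (p := p.Prime)).ne_zero)))

/-- The dual monodromy operator `N* : f ↦ −(f ∘ N)`. -/
noncomputable def NStar (N : M →ₗ[ℚ_[p]] M) :
    Module.Dual ℚ_[p] M →ₗ[ℚ_[p]] Module.Dual ℚ_[p] M :=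
  -(N.dualMap)

/-- The operator `φ - lam·id`, with its type fixed so that it can be applied to vectors. -/
noncomputable abbrev subScalar (φ : M →ₗ[ℚ_[p]] M) (lam : ℚ_[p]) : M →ₗ[ℚ_[p]] M :=
  φ - lam • LinearMap.id

/-- If `ker A² = ker A` then `A` and `A²` have the same image on every finite-dimensional `A`-stable
subspace: `A` is injective on `A(D)`, hence maps it onto itself. -/
lemma exists_sq_eq [FiniteDimensional ℚ_[p] M] (A : M →ₗ[ℚ_[p]] M)
    (hA : LinearMap.ker (A ^ 2) = LinearMap.ker A) (D : Submodule ℚ_[p] M)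
    (hD : ∀ x ∈ D, A x ∈ D) {x : M} (hx : x ∈ D) : ∃ h ∈ D, A x = A (A h) := by
  have hker : ∀ y, A (A y) = 0 → A y = 0 := fun y hy => by
    have : y ∈ LinearMap.ker (A ^ 2) := by
      rw [LinearMap.mem_ker, pow_two]; exact hy
    rw [hA] at this
    exact this
  have hle : (D.map A).map A ≤ D.map A := by
    rintro _ ⟨y, hy, rfl⟩
    obtain ⟨z, hz, rfl⟩ := hy
    exact ⟨A z, hD z hz, rfl⟩
  have hinj : Function.Injective (A.domRestrict (D.map A)) := by
    rw [← LinearMap.ker_eq_bot, LinearMap.ker_eq_bot']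
    rintro ⟨_, y, hy, rfl⟩ h0
    exact Subtype.ext (hker y h0)
  have heq : (D.map A).map A = D.map A := by
    apply Submodule.eq_of_le_of_finrank_eq hle
    rw [← LinearMap.range_domRestrict]
    exact LinearMap.finrank_range_of_inj hinj
  have hAx : A x ∈ (D.map A).map A := by
    rw [heq]; exact ⟨x, hx, rfl⟩
  obtain ⟨_, ⟨h, hh, rfl⟩, e⟩ := hAx
  exact ⟨h, hh, e.symm⟩

lemma SemisimpleAt.apply_eq_zero {φ : M →ₗ[ℚ_[p]] M} {lam : ℚ_[p]} (h : SemisimpleAt p φ lam)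
    {x : M} (hx : (subScalar p φ lam) ((subScalar p φ lam) x) = 0) :
    (subScalar p φ lam) x = 0 := by
  have : x ∈ LinearMap.ker ((subScalar p φ lam) ^ 2) := by
    rw [LinearMap.mem_ker, pow_two]; exact hx
  rw [h] at this
  exact this

lemma map_equiv_eq [FiniteDimensional ℚ_[p] M] (φ : M ≃ₗ[ℚ_[p]] M) (D : Submodule ℚ_[p] M)
    (hDφ : D.map φ.toLinearMap ≤ D) : D.map φ.toLinearMap = D :=
  Submodule.eq_of_le_of_finrank_eq hDφ (LinearEquiv.finrank_map_eq φ D)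

lemma p_ne_zero : (p : ℚ_[p]) ≠ 0 :=
  Nat.cast_ne_zero.mpr (Fact.out (p := p.Prime)).ne_zero

/-- A description of `D₋₁` that does not involve eigenspaces. -/
lemma Dminus_eq [FiniteDimensional ℚ_[p] M] (φ : M ≃ₗ[ℚ_[p]] M) (N : M →ₗ[ℚ_[p]] M)
    (hrel : N ∘ₗ φ.toLinearMap = (p : ℚ_[p]) • (φ.toLinearMap ∘ₗ N))
    (hss1 : SemisimpleAt p φ.toLinearMap 1) (D : Submodule ℚ_[p] M)
    (hDφ : D.map φ.toLinearMap ≤ D) (hDN : D.map N ≤ D) :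
    Dminus p φ N D =
      D.map (LinearMap.id - (p : ℚ_[p])⁻¹ • φ.symm.toLinearMap) ⊔ D.map N := by
  have hrel' : ∀ x, N (φ x) = (p : ℚ_[p]) • φ (N x) := fun x => LinearMap.congr_fun hrel x
  have hφ : ∀ x ∈ D, φ x ∈ D := fun x hx => hDφ ⟨x, hx, rfl⟩
  have hN : ∀ x ∈ D, N x ∈ D := fun x hx => hDN ⟨x, hx, rfl⟩
  apply le_antisymm
  · exact sup_le_sup_left (Submodule.map_mono inf_le_left) _
  · refine sup_le le_sup_left ?_
    rintro _ ⟨x, hx, rfl⟩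
    obtain ⟨h, hh, e⟩ := exists_sq_eq p (subScalar p φ.toLinearMap 1) hss1 D
      (fun x hx => D.sub_mem (hφ x hx) (D.smul_mem _ hx)) hx
    have hfix : x - (φ h - h) ∈ D ⊓ eigSp p φ.toLinearMap 1 := by
      refine ⟨D.sub_mem hx (D.sub_mem (hφ h hh) hh), ?_⟩
      simp only [subScalar, LinearMap.sub_apply, LinearEquiv.coe_coe, one_smul, LinearMap.id_apply] at e
      change (subScalar p φ.toLinearMap 1) _ = 0
      simp only [subScalar, LinearMap.sub_apply, LinearEquiv.coe_coe, one_smul, LinearMap.id_apply]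
      rw [map_sub, sub_sub_sub_comm, e, sub_self]
    have hsplit : N x = (LinearMap.id - (p : ℚ_[p])⁻¹ • φ.symm.toLinearMap : M →ₗ[ℚ_[p]] M)
        ((p : ℚ_[p]) • φ (N h)) + N (x - (φ h - h)) := by
      have h2 : (LinearMap.id - (p : ℚ_[p])⁻¹ • φ.symm.toLinearMap : M →ₗ[ℚ_[p]] M)
          ((p : ℚ_[p]) • φ (N h))
          = (p : ℚ_[p]) • φ (N h) - N h := by
        simp [smul_sub, smul_smul, p_ne_zero p]
      rw [h2, map_sub, map_sub, hrel']
      abel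
    rw [hsplit]
    exact Submodule.add_mem_sup ⟨_, D.smul_mem _ (hφ _ (hN h hh)), rfl⟩ ⟨_, hfix, rfl⟩

/-- A description of `D₁` that does not involve eigenspaces. -/
lemma Dplus_eq [FiniteDimensional ℚ_[p] M] (φ : M ≃ₗ[ℚ_[p]] M) (N : M →ₗ[ℚ_[p]] M)
    (hrel : N ∘ₗ φ.toLinearMap = (p : ℚ_[p]) • (φ.toLinearMap ∘ₗ N))
    (hss1 : SemisimpleAt p φ.toLinearMap 1) (D : Submodule ℚ_[p] M)
    (hDφ : D.map φ.toLinearMap ≤ D) (hDN : D.map N ≤ D) :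
    Dplus p φ N D =
      D.comap (subScalar p φ.toLinearMap 1) ⊓ D.comap N := by
  have hrel' : ∀ x, N (φ x) = (p : ℚ_[p]) • φ (N x) := fun x => LinearMap.congr_fun hrel x
  have hφ : ∀ x ∈ D, φ x ∈ D := fun x hx => hDφ ⟨x, hx, rfl⟩
  have hN : ∀ x ∈ D, N x ∈ D := fun x hx => hDN ⟨x, hx, rfl⟩
  have hA : ∀ x ∈ D, (subScalar p φ.toLinearMap 1) x ∈ D :=
    fun x hx => D.sub_mem (hφ x hx) (D.smul_mem _ hx)
  apply le_antisymm
  · refine sup_le (fun x hx => ⟨hA x hx, hN x hx⟩) ?_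
    rintro x ⟨hx, hx'⟩
    refine ⟨?_, hx'.1⟩
    have h0 : (subScalar p φ.toLinearMap 1) x = 0 := hx
    change subScalar p φ.toLinearMap 1 x ∈ D
    rw [h0]
    exact D.zero_mem
  · rintro x ⟨hx, hxN⟩
    obtain ⟨k, hk, e⟩ := exists_sq_eq p (subScalar p φ.toLinearMap 1) hss1 D hA
      (x := subScalar p φ.toLinearMap 1 x) hx
    set A := subScalar p φ.toLinearMap 1 with hAdef
    have hfix : A (x - k) = 0 :=
      hss1.apply_eq_zero p (by rw [map_sub, map_sub]; exact sub_eq_zero.mpr e)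
    have hfix' : φ (x - k) = x - k := by
      have h1 := hfix
      rw [hAdef, subScalar, LinearMap.sub_apply, sub_eq_zero] at h1
      simpa using h1
    have hNg : N (x - k) ∈ D := by
      rw [map_sub]
      exact D.sub_mem hxN (hN k hk)
    have heig : N (x - k) ∈ eigSp p φ.toLinearMap (p : ℚ_[p])⁻¹ := by
      have h1 := hrel' (x - k)
      rw [hfix'] at h1
      change φ (N (x - k)) - (p : ℚ_[p])⁻¹ • N (x - k) = 0
      rw [sub_eq_zero, eq_inv_smul_iff₀ (p_ne_zero p)]
      exact h1.symm
    rw [show x = k + (x - k) by abel]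
    exact Submodule.add_mem_sup hk ⟨hfix, hNg, heig⟩

lemma phiStar_apply (φ : M ≃ₗ[ℚ_[p]] M) (f : Module.Dual ℚ_[p] M) (x : M) :
    phiStar p φ f x = (p : ℚ_[p])⁻¹ * f (φ.symm x) := rfl

lemma phiStar_symm_apply (φ : M ≃ₗ[ℚ_[p]] M) (f : Module.Dual ℚ_[p] M) (x : M) :
    (phiStar p φ).symm f x = (p : ℚ_[p]) * f (φ x) := by
  obtain ⟨g, rfl⟩ := (phiStar p φ).surjective f
  rw [LinearEquiv.symm_apply_apply, phiStar_apply, LinearEquiv.symm_apply_apply,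
    mul_inv_cancel_left₀ (p_ne_zero p)]

lemma NStar_apply (N : M →ₗ[ℚ_[p]] M) (f : Module.Dual ℚ_[p] M) (x : M) :
    NStar p N f x = -f (N x) := rfl

/-- Duality sends semisimplicity at `(pλ)⁻¹` to semisimplicity at `λ`: up to a unit,
`φ* − λ` is the transpose of `φ − (pλ)⁻¹`, whose image equals that of its square. -/
lemma semisimpleAt_phiStar [FiniteDimensional ℚ_[p] M] (φ : M ≃ₗ[ℚ_[p]] M) {lam mu : ℚ_[p]}
    (hlm : (p : ℚ_[p]) * lam * mu = 1) (h : SemisimpleAt p φ.toLinearMap mu) :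
    SemisimpleAt p (phiStar p φ).toLinearMap lam := by
  have hp := p_ne_zero p
  have hlam : lam ≠ 0 := by rintro rfl; simp at hlm
  -- `(φ* - λ) f` evaluated at `φ x` is `-λ` times `f` evaluated at `(φ - μ) x`.
  have key : ∀ (f : Module.Dual ℚ_[p] M) (x : M),
      (subScalar p (phiStar p φ).toLinearMap lam) f (φ x) =
        -lam * f ((subScalar p φ.toLinearMap mu) x) := by
    intro f x
    have hinv : (p : ℚ_[p])⁻¹ = lam * mu := by
      rw [← mul_one (p : ℚ_[p])⁻¹, ← hlm, mul_assoc, inv_mul_cancel_left₀ hp]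
    simp only [subScalar, LinearMap.sub_apply, LinearMap.smul_apply, LinearMap.id_apply,
      LinearEquiv.coe_coe, phiStar_apply, LinearEquiv.symm_apply_apply, map_sub, map_smul, smul_eq_mul, hinv]
    ring
  have hcomm : ∀ x, (subScalar p φ.toLinearMap mu) (φ x) =
      φ ((subScalar p φ.toLinearMap mu) x) := by
    intro x; simp [subScalar]
  apply le_antisymm
  · intro f hf
    rw [LinearMap.mem_ker, pow_two] at hf
    change (subScalar p (phiStar p φ).toLinearMap lam)
      ((subScalar p (phiStar p φ).toLinearMap lam) f) = 0 at hf
    have hf2 : ∀ x, f ((subScalar p φ.toLinearMap mu)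
        ((subScalar p φ.toLinearMap mu) x)) = 0 := by
      intro x
      have h1 := LinearMap.congr_fun hf (φ (φ x))
      rw [key, hcomm, key] at h1
      simpa [hlam] using h1
    rw [LinearMap.mem_ker]
    ext y
    obtain ⟨x, rfl⟩ := φ.surjective y
    obtain ⟨k, -, e⟩ := exists_sq_eq p (subScalar p φ.toLinearMap mu) h ⊤
      (fun _ _ => trivial) (x := x) trivial
    rw [key, e, hf2]
    simp
  · intro f hf
    rw [LinearMap.mem_ker] at hf
    rw [LinearMap.mem_ker, pow_two, Module.End.mul_apply, hf, map_zero]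

/-- Annihilators turn preimages into images under the transpose. -/
lemma dualAnnihilator_comap_eq [FiniteDimensional ℚ_[p] M] (A : M →ₗ[ℚ_[p]] M)
    (D : Submodule ℚ_[p] M) :
    (D.comap A).dualAnnihilator = D.dualAnnihilator.map A.dualMap := by
  rw [← Subspace.dualCoannihilator_dualAnnihilator_eq (W := D.dualAnnihilator.map A.dualMap)]
  congr 1
  ext x
  rw [Submodule.mem_comap, Submodule.mem_dualCoannihilator,
    ← Subspace.forall_mem_dualAnnihilator_apply_eq_zero_iff]
  constructor
  · rintro h _ ⟨f, hf, rfl⟩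
    exact h f hf
  · intro h f hf
    exact h _ ⟨f, hf, rfl⟩


theorem benois_dual_filtration
    [FiniteDimensional ℚ_[p] M]
    (φ : M ≃ₗ[ℚ_[p]] M) (N : M →ₗ[ℚ_[p]] M)
    (hNnilp : IsNilpotent N)
    (hrel : N ∘ₗ φ.toLinearMap = (p : ℚ_[p]) • (φ.toLinearMap ∘ₗ N))
    (hss1 : SemisimpleAt p φ.toLinearMap 1)
    (hssp : SemisimpleAt p φ.toLinearMap (p : ℚ_[p])⁻¹)
    (D : Submodule ℚ_[p] M)
    (hDφ : D.map φ.toLinearMap ≤ D) (hDN : D.map N ≤ D) :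
    -- (a) `(M*, φ*, N*)` is a `(φ,N)`-module over `ℚ_p`, `φ*` semisimple at `1` and `p⁻¹`
    ((∀ f : Module.Dual ℚ_[p] M,
        phiStar p φ f = (p : ℚ_[p])⁻¹ • (f ∘ₗ φ.symm.toLinearMap) ∧
        NStar p N f = -(f ∘ₗ N)) ∧
     IsNilpotent (NStar p N) ∧
     NStar p N ∘ₗ (phiStar p φ).toLinearMap =
       (p : ℚ_[p]) • ((phiStar p φ).toLinearMap ∘ₗ NStar p N) ∧
     SemisimpleAt p (phiStar p φ).toLinearMap 1 ∧
     SemisimpleAt p (phiStar p φ).toLinearMap (p : ℚ_[p])⁻¹) ∧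
    -- (b) `D*` is a `(φ*,N*)`-submodule of `M*`
    ((D.dualAnnihilator.map (phiStar p φ).toLinearMap ≤ D.dualAnnihilator) ∧
     (D.dualAnnihilator.map (NStar p N) ≤ D.dualAnnihilator)) ∧
    -- (c) `D*_i` is the annihilator of `D₋ᵢ` for `i ∈ {−2, −1, 0, 1, 2}`
    ((⊥ : Submodule ℚ_[p] (Module.Dual ℚ_[p] M)) =
        (⊤ : Submodule ℚ_[p] M).dualAnnihilator ∧
     Dminus p (phiStar p φ) (NStar p N) D.dualAnnihilator =
        (Dplus p φ N D).dualAnnihilator ∧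
     D.dualAnnihilator = D.dualAnnihilator ∧
     Dplus p (phiStar p φ) (NStar p N) D.dualAnnihilator =
        (Dminus p φ N D).dualAnnihilator ∧
     (⊤ : Submodule ℚ_[p] (Module.Dual ℚ_[p] M)) =
        (⊥ : Submodule ℚ_[p] M).dualAnnihilator) := by
  have hp := p_ne_zero p
  have hrel' : ∀ x, N (φ x) = (p : ℚ_[p]) • φ (N x) := fun x => LinearMap.congr_fun hrel x
  have hφ : ∀ x ∈ D, φ x ∈ D := fun x hx => hDφ ⟨x, hx, rfl⟩
  have hφs : ∀ x ∈ D, φ.symm x ∈ D := by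
    intro x hx
    rw [← map_equiv_eq p φ D hDφ] at hx
    obtain ⟨y, hy, rfl⟩ := hx
    simpa using hy
  have hN : ∀ x ∈ D, N x ∈ D := fun x hx => hDN ⟨x, hx, rfl⟩
  have hnil : IsNilpotent (NStar p N) := by
    obtain ⟨n, hn⟩ := hNnilp
    have hpow : ∀ (k : ℕ) (f : Module.Dual ℚ_[p] M) (x : M),
        ((NStar p N) ^ k) f x = (-1) ^ k * f ((N ^ k) x) := by
      intro k
      induction k with
      | zero => intro f x; simp
      | succ k ih =>
        intro f x
        rw [pow_succ, Module.End.mul_apply, ih, NStar_apply, pow_succ' N, Module.End.mul_apply]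
        ring
    refine ⟨n, ?_⟩
    ext f x
    rw [hpow, hn]
    simp
  have hrelS : NStar p N ∘ₗ (phiStar p φ).toLinearMap =
      (p : ℚ_[p]) • ((phiStar p φ).toLinearMap ∘ₗ NStar p N) := by
    ext f x
    obtain ⟨y, rfl⟩ := φ.surjective x
    change -((p : ℚ_[p])⁻¹ * f (φ.symm (N (φ y)))) =
      (p : ℚ_[p]) * ((p : ℚ_[p])⁻¹ * -f (N (φ.symm (φ y))))
    rw [hrel', map_smul, LinearEquiv.symm_apply_apply, LinearEquiv.symm_apply_apply, map_smul,
      smul_eq_mul, inv_mul_cancel_left₀ hp, mul_inv_cancel_left₀ hp]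
  have hssS1 : SemisimpleAt p (phiStar p φ).toLinearMap 1 :=
    semisimpleAt_phiStar p φ (by field_simp) hssp
  have hsspS : SemisimpleAt p (phiStar p φ).toLinearMap (p : ℚ_[p])⁻¹ :=
    semisimpleAt_phiStar p φ (by field_simp) hss1
  have hDφS : D.dualAnnihilator.map (phiStar p φ).toLinearMap ≤ D.dualAnnihilator := by
    rintro _ ⟨f, hf, rfl⟩
    refine (Submodule.mem_dualAnnihilator _).mpr fun x hx => ?_
    have h0 := (Submodule.mem_dualAnnihilator f).mp hf _ (hφs x hx)
    rw [LinearEquiv.coe_coe, phiStar_apply, h0, mul_zero]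
  have hDNS : D.dualAnnihilator.map (NStar p N) ≤ D.dualAnnihilator := by
    rintro _ ⟨f, hf, rfl⟩
    refine (Submodule.mem_dualAnnihilator _).mpr fun x hx => ?_
    rw [NStar_apply, (Submodule.mem_dualAnnihilator f).mp hf _ (hN x hx), neg_zero]
  refine ⟨⟨fun f => ⟨rfl, rfl⟩, hnil, hrelS, hssS1, hsspS⟩, ⟨hDφS, hDNS⟩,
    Submodule.dualAnnihilator_top.symm, ?_, rfl, ?_, Submodule.dualAnnihilator_bot.symm⟩
  · rw [Dminus_eq p _ _ hrelS hssS1 _ hDφS hDNS, Dplus_eq p φ N hrel hss1 D hDφ hDN,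
      Subspace.dualAnnihilator_inf_eq, dualAnnihilator_comap_eq, dualAnnihilator_comap_eq]
    have e1 : LinearMap.id - (p : ℚ_[p])⁻¹ • (phiStar p φ).symm.toLinearMap =
        -LinearMap.dualMap (subScalar p φ.toLinearMap 1) := by
      ext f x
      change f x - (p : ℚ_[p])⁻¹ * (phiStar p φ).symm f x = -f (φ x - (1 : ℚ_[p]) • x)
      rw [phiStar_symm_apply, inv_mul_cancel_left₀ hp, one_smul, map_sub, neg_sub]
    rw [e1, NStar, Submodule.map_neg, Submodule.map_neg]
  · rw [Dplus_eq p _ _ hrelS hssS1 _ hDφS hDNS, Dminus_eq p φ N hrel hss1 D hDφ hDN,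
      Submodule.dualAnnihilator_sup_eq]
    ext f
    simp only [Submodule.mem_inf, Submodule.mem_comap, Submodule.mem_dualAnnihilator,
      Submodule.mem_map, forall_exists_index, and_imp, forall_apply_eq_imp_iff₂]
    refine and_congr (forall₂_congr fun x _ => ?_) (forall₂_congr fun x _ => ?_)
    · change (p : ℚ_[p])⁻¹ * f (φ.symm x) - (1 : ℚ_[p]) * f x = 0 ↔
        f (x - (p : ℚ_[p])⁻¹ • φ.symm x) = 0
      rw [map_sub, map_smul, smul_eq_mul, one_mul, sub_eq_zero, sub_eq_zero, eq_comm]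
    · rw [NStar_apply, neg_eq_zero]

end
end

section
/- Let p be a prime and let M be a filtered (φ,N)-module over ℚ_p. Then dim_{ℚ_p} H¹(C•_st(M)) − dim_{ℚ_p} H⁰(C•_st(M)) = dim_{ℚ_p}(M/Fil⁰M) + dim_{ℚ_p} {f ∈ Hom_{ℚ_p}(M, ℚ_p) : f ∘ N = 0 and p·(f ∘ φ) = f}. (This is the content of Corollary 1.4.5 at the level of filtered (φ,N)-modules: dim H¹_st(D) − dim H⁰(D) = dim t_D + dim D_cris(D*(χ))^{φ=1}.) -/
/-!
The formula is the Euler characteristic of the complex `C•_st(M)`: rank-nullity for `g` and `h`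
gives `dim H¹ − dim H⁰ = (dim t_M + 2 dim M) − dim M − rank h = dim t_M + dim coker h`, using
`im g ⊆ ker h` (`range_gSt_le_ker_hSt`). The functionals `f` with `f ∘ N = 0` and `p (f ∘ φ) = f`
are those vanishing on `im h` (`dualFixed_eq_dualAnnihilator`), so they form a space of dimension
`dim coker h`.
-/

/-!
Statement 4 (Benois, Corollary 1.4.5 at the level of filtered `(φ,N)`-modules).

Let `M` be a filtered `(φ,N)`-module over `ℚ_p`, with complex
`C•_st(M) : M →g t_M ⊕ M ⊕ M →h M`, `g(x) = (x mod Fil⁰M, (1−φ)x, −N x)`,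
`h(x̄,y,z) = N(y) − (p·φ − 1)(z)`.  Then
`dim H¹(C•_st(M)) − dim H⁰(C•_st(M)) = dim t_M + dim {f ∈ M* : f∘N = 0, p·(f∘φ) = f}`.
-/

open LinearMap Submodule

section

variable (p : ℕ) [Fact p.Prime]
variable {M : Type*} [AddCommGroup M] [Module ℚ_[p] M]

/-- The first differential `g : M → t_M ⊕ M ⊕ M`, `g(x) = (x mod Fil⁰M, (1−φ)x, −Nx)`. -/
noncomputable def gSt (φ N : M →ₗ[ℚ_[p]] M) (Fil : ℤ → Submodule ℚ_[p] M) :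
    M →ₗ[ℚ_[p]] (M ⧸ Fil 0) × M × M :=
  LinearMap.prod (Fil 0).mkQ (LinearMap.prod (LinearMap.id - φ) (-N))

/-- The second differential `h : t_M ⊕ M ⊕ M → M`, `h(x̄,y,z) = N(y) − (p·φ − 1)(z)`. -/
noncomputable def hSt (φ N : M →ₗ[ℚ_[p]] M) (Fil : ℤ → Submodule ℚ_[p] M) :
    (M ⧸ Fil 0) × M × M →ₗ[ℚ_[p]] M :=
  N ∘ₗ (LinearMap.fst ℚ_[p] M M ∘ₗ LinearMap.snd ℚ_[p] (M ⧸ Fil 0) (M × M)) -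
    ((p : ℚ_[p]) • φ - LinearMap.id) ∘ₗ
      (LinearMap.snd ℚ_[p] M M ∘ₗ LinearMap.snd ℚ_[p] (M ⧸ Fil 0) (M × M))

/-- `H¹(C•_st(M)) = ker h / im g`. -/
noncomputable abbrev H1St (φ N : M →ₗ[ℚ_[p]] M) (Fil : ℤ → Submodule ℚ_[p] M) :=
  ↥(LinearMap.ker (hSt p φ N Fil)) ⧸
    Submodule.comap (LinearMap.ker (hSt p φ N Fil)).subtype
      (LinearMap.range (gSt p φ N Fil))

/-- The subspace `{f ∈ Hom(M, ℚ_p) : f ∘ N = 0 ∧ p·(f ∘ φ) = f}` of the dual of `M`. -/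
noncomputable def dualFixed (φ N : M →ₗ[ℚ_[p]] M) :
    Submodule ℚ_[p] (Module.Dual ℚ_[p] M) :=
  LinearMap.ker N.dualMap ⊓
    LinearMap.ker ((p : ℚ_[p]) • φ.dualMap - LinearMap.id)

/-- `h ∘ g = 0`; this is where the relation `N φ = p φ N` enters. -/
lemma range_gSt_le_ker_hSt (φ N : M →ₗ[ℚ_[p]] M) (hrel : N ∘ₗ φ = (p : ℚ_[p]) • (φ ∘ₗ N))
    (Fil : ℤ → Submodule ℚ_[p] M) :
    LinearMap.range (gSt p φ N Fil) ≤ LinearMap.ker (hSt p φ N Fil) := by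
  rintro _ ⟨x, rfl⟩
  have h := LinearMap.congr_fun hrel x
  simp only [LinearMap.comp_apply, LinearMap.smul_apply] at h
  simp [gSt, hSt, h]
  abel

/-- A functional vanishes on `im h` exactly when it kills `im N` and `im (pφ − 1)`, so the
right-hand side of the formula is the dual of `H² = coker h`. -/
lemma dualFixed_eq_dualAnnihilator (φ N : M →ₗ[ℚ_[p]] M) (Fil : ℤ → Submodule ℚ_[p] M) :
    dualFixed p φ N = (LinearMap.range (hSt p φ N Fil)).dualAnnihilator := by
  ext f
  simp only [dualFixed, Submodule.mem_inf, LinearMap.mem_ker, Submodule.mem_dualAnnihilator]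
  constructor
  · rintro ⟨h1, h2⟩ _ ⟨⟨t, y, z⟩, rfl⟩
    have h1y := LinearMap.congr_fun h1 y
    have h2z := LinearMap.congr_fun h2 z
    simp at h1y h2z
    simp [hSt, h1y, h2z]
  · intro H
    constructor
    · ext y
      simpa [hSt] using H _ ⟨(0, y, 0), rfl⟩
    · ext z
      have h := H _ ⟨(0, 0, z), rfl⟩
      simp [hSt] at h
      simp
      linear_combination -h

theorem benois_dim_H1_sub_H0
    [FiniteDimensional ℚ_[p] M]
    (φ N : M →ₗ[ℚ_[p]] M)
    (hφ : Function.Bijective φ) (hNnilp : IsNilpotent N)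
    (hrel : N ∘ₗ φ = (p : ℚ_[p]) • (φ ∘ₗ N))
    (Fil : ℤ → Submodule ℚ_[p] M)
    (hFil_anti : Antitone Fil)
    (hFil_exh : ∃ n : ℤ, Fil n = ⊤) (hFil_sep : ∃ n : ℤ, Fil n = ⊥) :
    Module.finrank ℚ_[p] (H1St p φ N Fil) =
      Module.finrank ℚ_[p] ↥(LinearMap.ker (gSt p φ N Fil)) +
      Module.finrank ℚ_[p] (M ⧸ Fil 0) +
      Module.finrank ℚ_[p] ↥(dualFixed p φ N) := by
  have hle := range_gSt_le_ker_hSt p φ N hrel Fil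
  have hg := LinearMap.finrank_range_add_finrank_ker (gSt p φ N Fil)
  have hh := LinearMap.finrank_range_add_finrank_ker (hSt p φ N Fil)
  have hq := Submodule.finrank_quotient_add_finrank
    (Submodule.comap (LinearMap.ker (hSt p φ N Fil)).subtype (LinearMap.range (gSt p φ N Fil)))
  have hc := (Submodule.comapSubtypeEquivOfLe hle).finrank_eq
  have hd := Subspace.finrank_add_finrank_dualAnnihilator_eq (LinearMap.range (hSt p φ N Fil))
  rw [← dualFixed_eq_dualAnnihilator] at hd
  rw [Module.finrank_prod, Module.finrank_prod] at hh
  unfold H1St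
  omega

end
end

section
/- Let p be a prime and let M be a filtered φ-module over ℚ_p (a filtered (φ,N)-module with N = 0, considered in the category of filtered φ-modules). For (x, y) ∈ M × M let E(x,y) be M ⊕ ℚ_p·e with φ_E|_M = φ, φ_E(e) = e + y, Fil^i E = Fil^i M for i ≥ 1 and Fil^i E = Fil^i M + ℚ_p·(e + x) for i ≤ 0. Then every extension of the unit object 1 by M in the category of filtered φ-modules is equivalent to some E(x,y), and E(x,y) and E(x',y') are equivalent extensions if and only if there exists u ∈ M with x' ∈ x + u + Fil⁰M and y' = y − (φ − 1)(u). Consequently the set of equivalence classes of extensions of 1 by M is in natural bijection with the cokernel of the map f : M → (M/Fil⁰M) ⊕ M, f(u) = (u mod Fil⁰M, (1−φ)(u)), i.e. with H¹(C•_cris(M)). (This is Proposition 1.4.4(i) at the level of filtered φ-modules.) -/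
/-!
The proof identifies each extension with a pair `(x, y)`.

Membership in `Fil^i E(x,y)` is explicit: `(m, c)` lies in it iff `m - c • x ∈ Fil^i M` when
`i ≤ 0`, and iff `m ∈ Fil^i M` and `c = 0` when `i > 0`. This shows that `E(x,y)` is an extension.

For an arbitrary extension `V`, strictness of `V → 1` gives a lift `v ∈ Fil⁰ V` of `1`. Since `φ`
is trivial on the quotient, `φ v - v` comes from some `y ∈ M`, and `(m, c) ↦ ι m + c • v` is an
isomorphism from `E(0, y)` onto `V`.

An equivalence `E(x,y) → E(x',y')` restricts to the identity on `M` and on the quotient, so it is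
determined by `u` with `e ↦ e + u`; compatibility with `φ` says `y' = y - (φ u - u)`, and
compatibility with the filtration says `x' - x - u ∈ Fil⁰ M` (the conditions at `i < 0` follow
because the filtration is decreasing). Modulo `Fil⁰ M` in the first coordinate this is the relation
of differing by `f u`, so the classes form the cokernel of `f`.
-/

/-!
Statement 6 (Benois, Proposition 1.4.4(i) at the level of filtered `φ`-modules).

Let `M` be a filtered `φ`-module over `ℚ_p`.  For `(x,y) ∈ M × M` let `E(x,y)` be
`M ⊕ ℚ_p·e` with `φ_E|_M = φ`, `φ_E(e) = e + y`, `Fil^i E = Fil^i M` for `i ≥ 1` and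
`Fil^i E = Fil^i M + ℚ_p·(e+x)` for `i ≤ 0`.  Then every extension of the unit object `1`
by `M` is equivalent to some `E(x,y)`; `E(x,y)` and `E(x',y')` are equivalent iff there is
`u ∈ M` with `x' ∈ x + u + Fil⁰M` and `y' = y − (φ−1)(u)`; consequently the equivalence
classes of extensions of `1` by `M` are in bijection with
`H¹(C•_cris(M)) = coker (f : M → (M/Fil⁰M) ⊕ M)`, `f(u) = (u mod Fil⁰M, (1−φ)u)`.

An extension of `1` by `M` is encoded as a filtered `φ`-module `V` together with an
injective strict morphism `ι : M → V` and a linear form `π : V → ℚ_p` realizing the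
quotient `V/ι(M)` together with its identification with the unit object `1`.
-/

open LinearMap Submodule

/-- The raw data of a filtered `φ`-module structure on `V`. -/
structure PrePhiMod (p : ℕ) [Fact p.Prime] (V : Type) [AddCommGroup V]
    [Module ℚ_[p] V] where
  phi : V →ₗ[ℚ_[p]] V
  Fil : ℤ → Submodule ℚ_[p] V

section

variable (p : ℕ) [Fact p.Prime]

/-- `S` is a filtered `φ`-module: `φ` is an automorphism and the filtration is
decreasing, exhaustive and separated, on a finite-dimensional space. -/
def IsFilPhiMod {V : Type} [AddCommGroup V] [Module ℚ_[p] V]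
    (S : PrePhiMod p V) : Prop :=
  Function.Bijective S.phi ∧ Antitone S.Fil ∧
    (∃ n : ℤ, S.Fil n = ⊤) ∧ (∃ n : ℤ, S.Fil n = ⊥) ∧ FiniteDimensional ℚ_[p] V

/-- `(V, ι, π)` is an extension of the unit object `1` by `M`:  `V` is a filtered
`φ`-module, `ι : M → V` is an injective strict morphism, and `π : V → ℚ_p` identifies
`V/ι(M)` (with the induced `φ` and the image filtration) with the unit object `1`. -/
def IsExtensionPhi {M V : Type} [AddCommGroup M] [Module ℚ_[p] M]
    [AddCommGroup V] [Module ℚ_[p] V] (SM : PrePhiMod p M) (SV : PrePhiMod p V)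
    (ι : M →ₗ[ℚ_[p]] V) (π : V →ₗ[ℚ_[p]] ℚ_[p]) : Prop :=
  IsFilPhiMod p SV ∧
  Function.Injective ι ∧
  SV.phi ∘ₗ ι = ι ∘ₗ SM.phi ∧
  (∀ i : ℤ, SM.Fil i = (SV.Fil i).comap ι) ∧
  π ∘ₗ SV.phi = π ∧
  LinearMap.ker π = LinearMap.range ι ∧
  (∀ i : ℤ, i ≤ 0 → (SV.Fil i).map π = ⊤) ∧
  (∀ i : ℤ, 0 < i → (SV.Fil i).map π = ⊥)

/-- Equivalence of two extensions of `1` by `M`: an isomorphism of filtered `φ`-modules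
compatible with the inclusions of `M` and inducing the identity on the quotients
identified with `1`. -/
def ExtEquivPhi {M V V' : Type} [AddCommGroup M] [Module ℚ_[p] M]
    [AddCommGroup V] [Module ℚ_[p] V]
    [AddCommGroup V'] [Module ℚ_[p] V'] (SV : PrePhiMod p V)
    (ι : M →ₗ[ℚ_[p]] V) (π : V →ₗ[ℚ_[p]] ℚ_[p]) (SV' : PrePhiMod p V')
    (ι' : M →ₗ[ℚ_[p]] V') (π' : V' →ₗ[ℚ_[p]] ℚ_[p]) : Prop :=
  ∃ θ : V →ₗ[ℚ_[p]] V', Function.Bijective θ ∧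
    θ ∘ₗ SV.phi = SV'.phi ∘ₗ θ ∧
    (∀ i : ℤ, (SV.Fil i).map θ = SV'.Fil i) ∧
    θ ∘ₗ ι = ι' ∧ π' ∘ₗ θ = π

variable {M : Type} [AddCommGroup M] [Module ℚ_[p] M]

/-- The extension `E(x,y) = M ⊕ ℚ_p·e`, `φ_E(e) = e + y`,
`Fil^i E(x,y) = Fil^i M + ℚ_p·(e+x)` for `i ≤ 0` and `Fil^i M` for `i ≥ 1`. -/
noncomputable def ExtConsPhi (SM : PrePhiMod p M) (x y : M) :
    PrePhiMod p (M × ℚ_[p]) where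
  phi := LinearMap.prod
    (SM.phi ∘ₗ LinearMap.fst ℚ_[p] M ℚ_[p] +
      (LinearMap.snd ℚ_[p] M ℚ_[p]).smulRight y)
    (LinearMap.snd ℚ_[p] M ℚ_[p])
  Fil := fun i => (SM.Fil i).map (LinearMap.inl ℚ_[p] M ℚ_[p]) ⊔
    (if i ≤ 0 then Submodule.span ℚ_[p] {((x, 1) : M × ℚ_[p])} else ⊥)

/-- The map `f : M → (M/Fil⁰M) ⊕ M`, `f(u) = (u mod Fil⁰M, (1−φ)u)`. -/
noncomputable def fCris (SM : PrePhiMod p M) :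
    M →ₗ[ℚ_[p]] (M ⧸ SM.Fil 0) × M :=
  LinearMap.prod (SM.Fil 0).mkQ (LinearMap.id - SM.phi)

/-- `H¹(C•_cris(M)) = coker f`. -/
noncomputable abbrev H1Cris (SM : PrePhiMod p M) :=
  ((M ⧸ SM.Fil 0) × M) ⧸ LinearMap.range (fCris p SM)

/-- The relation on pairs `(x,y)` identifying `E(x,y)` and `E(x',y')` when they are
equivalent extensions. -/
def CobRelPhi (SM : PrePhiMod p M) (a b : M × M) : Prop :=
  ∃ u : M, b.1 - a.1 - u ∈ SM.Fil 0 ∧ b.2 = a.2 - (SM.phi u - u)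

variable {p}

theorem mem_ExtConsPhi_of_nonpos (SM : PrePhiMod p M) (x y : M) {i : ℤ} (hi : i ≤ 0)
    (w : M × ℚ_[p]) : w ∈ (ExtConsPhi p SM x y).Fil i ↔ w.1 - w.2 • x ∈ SM.Fil i := by
  simp only [ExtConsPhi, if_pos hi, Submodule.mem_sup, Submodule.mem_map,
    Submodule.mem_span_singleton]
  constructor
  · rintro ⟨_, ⟨m, hm, rfl⟩, _, ⟨c, rfl⟩, rfl⟩
    simpa using hm
  · intro h
    refine ⟨_, ⟨_, h, rfl⟩, _, ⟨w.2, rfl⟩, ?_⟩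
    ext <;> simp

theorem mem_ExtConsPhi_of_pos (SM : PrePhiMod p M) (x y : M) {i : ℤ} (hi : 0 < i)
    (w : M × ℚ_[p]) : w ∈ (ExtConsPhi p SM x y).Fil i ↔ w.1 ∈ SM.Fil i ∧ w.2 = 0 := by
  simp only [ExtConsPhi, if_neg (not_le.mpr hi), sup_bot_eq, Submodule.mem_map]
  constructor
  · rintro ⟨m, hm, rfl⟩
    exact ⟨hm, rfl⟩
  · rintro ⟨h, h0⟩
    exact ⟨w.1, h, Prod.ext rfl h0.symm⟩

theorem ExtConsPhi_phi_apply (SM : PrePhiMod p M) (x y : M) (w : M × ℚ_[p]) :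
    (ExtConsPhi p SM x y).phi w = (SM.phi w.1 + w.2 • y, w.2) := rfl

theorem isFilPhiMod_ExtConsPhi (SM : PrePhiMod p M) (hM : IsFilPhiMod p SM) (x y : M) :
    IsFilPhiMod p (ExtConsPhi p SM x y) := by
  obtain ⟨hphi, hanti, ⟨a, ha⟩, ⟨b, hb⟩, hfin⟩ := hM
  refine ⟨⟨?_, ?_⟩, ?_, ⟨min a 0, ?_⟩, ⟨max b 1, ?_⟩, inferInstance⟩
  · rintro ⟨m, c⟩ ⟨m', c'⟩ h
    simp only [ExtConsPhi_phi_apply, Prod.mk.injEq] at h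
    obtain ⟨h, rfl⟩ := h
    rw [hphi.1 (add_right_cancel h)]
  · rintro ⟨m, c⟩
    obtain ⟨n, hn⟩ := hphi.2 (m - c • y)
    exact ⟨(n, c), by simp [ExtConsPhi_phi_apply, hn]⟩
  · intro i j hij w hw
    rcases le_or_gt j 0 with hj | hj
    · rw [mem_ExtConsPhi_of_nonpos SM x y (hij.trans hj)]
      exact hanti hij ((mem_ExtConsPhi_of_nonpos SM x y hj w).1 hw)
    · obtain ⟨h1, h2⟩ := (mem_ExtConsPhi_of_pos SM x y hj w).1 hw
      rcases le_or_gt i 0 with hi | hi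
      · rw [mem_ExtConsPhi_of_nonpos SM x y hi, h2, zero_smul, sub_zero]
        exact hanti hij h1
      · exact (mem_ExtConsPhi_of_pos SM x y hi w).2 ⟨hanti hij h1, h2⟩
  · rw [eq_top_iff]
    intro w _
    rw [mem_ExtConsPhi_of_nonpos SM x y (min_le_right a 0)]
    exact hanti (min_le_left a 0) (ha ▸ Submodule.mem_top)
  · rw [eq_bot_iff]
    intro w hw
    obtain ⟨h1, h2⟩ := (mem_ExtConsPhi_of_pos SM x y (by omega) w).1 hw
    have h3 : w.1 ∈ SM.Fil b := hanti (le_max_left b 1) h1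
    rw [hb, Submodule.mem_bot] at h3
    exact Prod.ext h3 h2

theorem isExtensionPhi_ExtConsPhi (SM : PrePhiMod p M) (hM : IsFilPhiMod p SM) (x y : M) :
    IsExtensionPhi p SM (ExtConsPhi p SM x y)
      (LinearMap.inl ℚ_[p] M ℚ_[p]) (LinearMap.snd ℚ_[p] M ℚ_[p]) := by
  refine ⟨isFilPhiMod_ExtConsPhi SM hM x y, LinearMap.inl_injective, ?_, ?_, ?_, ?_, ?_, ?_⟩
  · ext m <;> simp [ExtConsPhi_phi_apply]
  · intro i
    ext m
    rw [Submodule.mem_comap]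
    rcases le_or_gt i 0 with hi | hi
    · simp [mem_ExtConsPhi_of_nonpos SM x y hi]
    · simp [mem_ExtConsPhi_of_pos SM x y hi]
  · rfl
  · exact LinearMap.ker_snd ℚ_[p] M ℚ_[p]
  · intro i hi
    rw [eq_top_iff]
    intro c _
    exact ⟨(c • x, c), (mem_ExtConsPhi_of_nonpos SM x y hi _).2 (by simp), rfl⟩
  · intro i hi
    rw [eq_bot_iff]
    rintro _ ⟨w, hw, rfl⟩
    exact ((mem_ExtConsPhi_of_pos SM x y hi w).1 hw).2

/-- A lift `v ∈ Fil⁰ V` of `1` splits the filtration, so one can take `x = 0`, and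
`φ v - v ∈ ker π` provides `y`. -/
theorem exists_extEquivPhi_ExtConsPhi (SM : PrePhiMod p M) {V : Type} [AddCommGroup V]
    [Module ℚ_[p] V] (SV : PrePhiMod p V) (ι : M →ₗ[ℚ_[p]] V) (π : V →ₗ[ℚ_[p]] ℚ_[p])
    (h : IsExtensionPhi p SM SV ι π) :
    ∃ x y : M, ExtEquivPhi p SV ι π (ExtConsPhi p SM x y)
        (LinearMap.inl ℚ_[p] M ℚ_[p]) (LinearMap.snd ℚ_[p] M ℚ_[p]) := by
  obtain ⟨⟨-, hanti, -⟩, hinj, hphi, hfil, hpi, hker, hle, hpos⟩ := h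
  obtain ⟨v, hv, hv1⟩ : (1 : ℚ_[p]) ∈ (SV.Fil 0).map π := hle 0 le_rfl ▸ Submodule.mem_top
  have hpi' : ∀ w, π (SV.phi w) = π w := fun w => LinearMap.congr_fun hpi w
  have hphi' : ∀ m, SV.phi (ι m) = ι (SM.phi m) := fun m => LinearMap.congr_fun hphi m
  have hpiι : ∀ m, π (ι m) = 0 := fun m => by
    rw [← LinearMap.mem_ker, hker]
    exact ⟨m, rfl⟩
  have hmem : ∀ w, π w = 0 → ∃ m, ι m = w := fun w hw => by
    rw [← LinearMap.mem_ker, hker] at hw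
    exact hw
  obtain ⟨y, hy⟩ := hmem (SV.phi v - v) (by rw [map_sub, hpi', sub_self])
  -- the inverse of the required isomorphism: `(m, c) ↦ ι m + c • v`
  let g : (M × ℚ_[p]) →ₗ[ℚ_[p]] V := LinearMap.coprod ι (LinearMap.toSpanSingleton ℚ_[p] V v)
  have hg : ∀ w, g w = ι w.1 + w.2 • v := fun w => by simp [g]
  have hpig : ∀ w, π (g w) = w.2 := fun w => by simp [hg, hpiι, hv1]
  have hgbij : Function.Bijective g := by
    constructor
    · rw [← LinearMap.ker_eq_bot, LinearMap.ker_eq_bot']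
      intro w hw
      have h2 : w.2 = 0 := by rw [← hpig, hw, map_zero]
      rw [hg, h2, zero_smul, add_zero] at hw
      exact Prod.ext (hinj (hw.trans (map_zero ι).symm)) h2
    · intro w
      obtain ⟨m, hm⟩ := hmem (w - π w • v) (by simp [hv1])
      exact ⟨(m, π w), by simp [hg, hm]⟩
  let e := LinearEquiv.ofBijective g hgbij
  have heg : ∀ w, e w = g w := fun _ => rfl
  refine ⟨0, y, e.symm.toLinearMap, e.symm.bijective, ?_, ?_, ?_, ?_⟩
  · ext w : 1
    obtain ⟨w, rfl⟩ := e.surjective w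
    apply e.injective
    have hy' : SV.phi v = ι y + v := by rw [hy, sub_add_cancel]
    simp only [LinearMap.comp_apply, LinearEquiv.coe_coe, LinearEquiv.apply_symm_apply,
      LinearEquiv.symm_apply_apply]
    simp only [heg, hg, ExtConsPhi_phi_apply, map_add, map_smul, hphi', hy', smul_add, add_assoc]
  · intro i
    ext w
    have hw : w ∈ (SV.Fil i).map e.symm.toLinearMap ↔ g w ∈ SV.Fil i := by
      rw [Submodule.mem_map]
      constructor
      · rintro ⟨z, hz, rfl⟩
        rw [← heg]
        simpa using hz
      · intro hw
        exact ⟨e w, hw, by simp⟩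
    rw [hw]
    rcases le_or_gt i 0 with hi | hi
    · rw [mem_ExtConsPhi_of_nonpos SM 0 y hi, smul_zero, sub_zero, hfil, Submodule.mem_comap, hg]
      exact Submodule.add_mem_iff_left _ (Submodule.smul_mem _ _ (hanti hi hv))
    · rw [mem_ExtConsPhi_of_pos SM 0 y hi, hfil, Submodule.mem_comap]
      constructor
      · intro h
        have h2 : w.2 = 0 := by
          rw [← hpig, ← Submodule.mem_bot ℚ_[p], ← hpos i hi]
          exact Submodule.mem_map_of_mem h
        rw [hg, h2, zero_smul, add_zero] at h
        exact ⟨h, h2⟩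
      · rintro ⟨h1, h2⟩
        rwa [hg, h2, zero_smul, add_zero]
  · ext m : 1
    apply e.injective
    simp only [LinearMap.comp_apply, LinearEquiv.coe_coe, LinearEquiv.apply_symm_apply]
    simp [heg, hg]
  · refine LinearMap.ext fun w => ?_
    obtain ⟨w, rfl⟩ := e.surjective w
    simp only [LinearMap.comp_apply, LinearEquiv.coe_coe, LinearEquiv.symm_apply_apply]
    rw [heg, hpig, LinearMap.snd_apply]

/-- The isomorphism attached to `u` is `(m, c) ↦ (m + c • u, c)`, i.e. `e ↦ e + u`; every
equivalence has this form. -/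
theorem extEquivPhi_ExtConsPhi_iff (SM : PrePhiMod p M) (hM : IsFilPhiMod p SM)
    (x y x' y' : M) :
    ExtEquivPhi p (ExtConsPhi p SM x y)
          (LinearMap.inl ℚ_[p] M ℚ_[p]) (LinearMap.snd ℚ_[p] M ℚ_[p])
          (ExtConsPhi p SM x' y')
          (LinearMap.inl ℚ_[p] M ℚ_[p]) (LinearMap.snd ℚ_[p] M ℚ_[p]) ↔
        ∃ u : M, x' - x - u ∈ SM.Fil 0 ∧ y' = y - (SM.phi u - u) := by
  constructor
  · rintro ⟨θ, -, hphi, hfil, hι, hπ⟩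
    have hι' : ∀ m, θ (m, 0) = (m, 0) := fun m => LinearMap.congr_fun hι m
    have h2 : (θ (0, 1)).2 = 1 := LinearMap.congr_fun hπ (0, 1)
    obtain ⟨u, hu⟩ : ∃ u, θ (0, 1) = (u, 1) := ⟨_, Prod.ext rfl h2⟩
    have hθ : ∀ m, θ (m, 1) = (m + u, 1) := fun m => by
      have : ((m, 1) : M × ℚ_[p]) = (m, 0) + (0, 1) := by simp
      rw [this, map_add, hι', hu]
      simp
    refine ⟨u, ?_, ?_⟩
    · have hx : ((x, 1) : M × ℚ_[p]) ∈ (ExtConsPhi p SM x y).Fil 0 := by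
        simp [mem_ExtConsPhi_of_nonpos SM x y le_rfl]
      have := Submodule.mem_map_of_mem (f := θ) hx
      rw [hfil, hθ, mem_ExtConsPhi_of_nonpos SM x' y' le_rfl, ← Submodule.neg_mem_iff] at this
      convert this using 1
      simp only [one_smul]
      abel
    · have := LinearMap.congr_fun hphi (0, 1)
      simp only [LinearMap.comp_apply, ExtConsPhi_phi_apply, map_zero, one_smul, zero_add, hθ,
        Prod.mk.injEq, and_true] at this
      rw [← add_sub_cancel_left (SM.phi u) y', ← this]
      abel
  · rintro ⟨u, hu, rfl⟩
    have hanti := hM.2.1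
    let θ : (M × ℚ_[p]) →ₗ[ℚ_[p]] (M × ℚ_[p]) := LinearMap.prod
      (LinearMap.fst ℚ_[p] M ℚ_[p] + (LinearMap.snd ℚ_[p] M ℚ_[p]).smulRight u)
      (LinearMap.snd ℚ_[p] M ℚ_[p])
    have hθ : ∀ w, θ w = (w.1 + w.2 • u, w.2) := fun _ => rfl
    have hmap : ∀ (S : Submodule ℚ_[p] (M × ℚ_[p])) w,
        w ∈ S.map θ ↔ (w.1 - w.2 • u, w.2) ∈ S := by
      intro S w
      rw [Submodule.mem_map]
      constructor
      · rintro ⟨z, hz, rfl⟩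
        simpa [hθ] using hz
      · intro h
        exact ⟨_, h, by simp [hθ]⟩
    refine ⟨θ, ⟨?_, ?_⟩, ?_, ?_, ?_, ?_⟩
    · rintro ⟨m, c⟩ ⟨m', c'⟩ h
      simp only [hθ, Prod.mk.injEq] at h
      obtain ⟨h, rfl⟩ := h
      rw [add_right_cancel h]
    · rintro ⟨m, c⟩
      exact ⟨(m - c • u, c), by simp [hθ]⟩
    · refine LinearMap.ext fun w => ?_
      simp only [LinearMap.comp_apply, hθ, ExtConsPhi_phi_apply, map_add, map_smul, smul_sub,
        Prod.mk.injEq, and_true]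
      abel
    · intro i
      ext w
      rw [hmap]
      rcases le_or_gt i 0 with hi | hi
      · rw [mem_ExtConsPhi_of_nonpos SM x y hi, mem_ExtConsPhi_of_nonpos SM x' _ hi]
        have h : w.2 • (x' - x - u) ∈ SM.Fil i := Submodule.smul_mem _ _ (hanti hi hu)
        rw [← Submodule.add_mem_iff_left (SM.Fil i) (x := w.1 - w.2 • x') h]
        simp only [smul_sub]
        abel_nf
      · rw [mem_ExtConsPhi_of_pos SM x y hi, mem_ExtConsPhi_of_pos SM x' _ hi]
        refine and_congr_left fun h => ?_
        have h : w.2 = 0 := h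
        simp [h]
    · refine LinearMap.ext fun m => ?_
      simp [hθ]
    · rfl

/-- The bijection is induced by `(x, y) ↦ (x mod Fil⁰ M, y)`. -/
theorem nonempty_quot_cobRelPhi_equiv (SM : PrePhiMod p M) :
    Nonempty (Quot (CobRelPhi p SM) ≃ H1Cris p SM) := by
  have key : ∀ a b : M × M, CobRelPhi p SM a b ↔
      ((LinearMap.range (fCris p SM)).mkQ ((SM.Fil 0).mkQ a.1, a.2) =
        (LinearMap.range (fCris p SM)).mkQ ((SM.Fil 0).mkQ b.1, b.2)) := by
    intro a b
    refine Iff.trans (exists_congr fun u => ?_)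
      (eq_comm.trans (Submodule.Quotient.eq (LinearMap.range (fCris p SM)))).symm
    have hf : fCris p SM u = ((SM.Fil 0).mkQ u, u - SM.phi u) := rfl
    rw [hf, Prod.mk_sub_mk, Prod.mk.injEq, ← map_sub,
      eq_comm (a := (SM.Fil 0).mkQ u)]
    refine and_congr (Submodule.Quotient.eq (SM.Fil 0)).symm ?_
    rw [eq_sub_iff_add_eq (a := u - SM.phi u),
      eq_comm (a := b.2), sub_eq_add_neg a.2, neg_sub, add_comm a.2]
  refine ⟨Equiv.ofBijective (Quot.lift
    (fun a => (LinearMap.range (fCris p SM)).mkQ ((SM.Fil 0).mkQ a.1, a.2))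
    fun a b h => (key a b).1 h) ⟨?_, ?_⟩⟩
  · rintro ⟨a⟩ ⟨b⟩ h
    exact Quot.sound ((key a b).2 h)
  · intro z
    obtain ⟨⟨q, y⟩, rfl⟩ := Submodule.mkQ_surjective _ z
    obtain ⟨x, rfl⟩ := Submodule.mkQ_surjective _ q
    exact ⟨Quot.mk _ (x, y), rfl⟩

variable (p)

theorem benois_ext_classification_cris
    (SM : PrePhiMod p M) (hM : IsFilPhiMod p SM) :
    -- every `E(x,y)` is an extension of `1` by `M`
    (∀ x y : M, IsExtensionPhi p SM (ExtConsPhi p SM x y)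
      (LinearMap.inl ℚ_[p] M ℚ_[p]) (LinearMap.snd ℚ_[p] M ℚ_[p])) ∧
    -- every extension of `1` by `M` is equivalent to some `E(x,y)`
    (∀ (V : Type) [AddCommGroup V], ∀ [Module ℚ_[p] V],
      ∀ (SV : PrePhiMod p V) (ι : M →ₗ[ℚ_[p]] V) (π : V →ₗ[ℚ_[p]] ℚ_[p]),
      IsExtensionPhi p SM SV ι π →
      ∃ x y : M, ExtEquivPhi p SV ι π (ExtConsPhi p SM x y)
        (LinearMap.inl ℚ_[p] M ℚ_[p]) (LinearMap.snd ℚ_[p] M ℚ_[p])) ∧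
    -- `E(x,y) ∼ E(x',y')` iff `∃ u, x' ∈ x + u + Fil⁰M` and `y' = y − (φ−1)u`
    (∀ x y x' y' : M,
      ExtEquivPhi p (ExtConsPhi p SM x y)
          (LinearMap.inl ℚ_[p] M ℚ_[p]) (LinearMap.snd ℚ_[p] M ℚ_[p])
          (ExtConsPhi p SM x' y')
          (LinearMap.inl ℚ_[p] M ℚ_[p]) (LinearMap.snd ℚ_[p] M ℚ_[p]) ↔
        ∃ u : M, x' - x - u ∈ SM.Fil 0 ∧ y' = y - (SM.phi u - u)) ∧
    -- consequently the equivalence classes are in bijection with `H¹(C•_cris(M))`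
    Nonempty (Quot (CobRelPhi p SM) ≃ H1Cris p SM) := by
  exact ⟨isExtensionPhi_ExtConsPhi SM hM,
    fun _ _ _ SV ι π h => exists_extEquivPhi_ExtConsPhi SM SV ι π h,
    extEquivPhi_ExtConsPhi_iff SM hM, nonempty_quot_cobRelPhi_equiv SM⟩

end
end

section
/- Let p be a prime, let (M, φ, N) be a (φ,N)-module over ℚ_p, let x ∈ M, and let m ≥ 0 be an integer with N^{m+1}(x) = 0. Set x_i = N^i(x) for 0 ≤ i ≤ m. Define M' = M ⊕ (⊕_{i=1}^{m+1} ℚ_p·e_i) with φ'|_M = φ, φ'(e_i) = p^{−i}·e_i + p^{−i}·x_{i−1} for 1 ≤ i ≤ m+1, N'|_M = N, N'(e_i) = e_{i+1} for 1 ≤ i ≤ m, and N'(e_{m+1}) = 0. Then (M', φ', N') is a (φ,N)-module over ℚ_p (φ' is bijective, N' is nilpotent, and N' ∘ φ' = p·(φ' ∘ N')), M is a (φ,N)-submodule of M', (p·φ' − 1)(e₁) = x, and the quotient M'/M has basis ē₁, …, ē_{m+1} on which the induced maps satisfy φ̄(ē_i) = p^{−i}·ē_i and N̄(ē_i) = ē_{i+1}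 (with ē_{m+2} = 0). (This is the construction used in the proof of Lemma 1.4.7(ii) to show that the functor D ↦ H²(C•_st(D)) is effaceable.) -/
/-!
Statement 7 (the effaceability construction in the proof of Lemma 1.4.7(ii) of Benois).

Given a `(φ,N)`-module `(M, φ, N)` over `ℚ_p`, `x ∈ M` and `m ≥ 0` with `N^{m+1}(x) = 0`,
set `x_i = N^i(x)`.  Define `M' = M ⊕ (⊕_{i=1}^{m+1} ℚ_p·e_i)` with `φ'|_M = φ`,
`φ'(e_i) = p^{−i}·e_i + p^{−i}·x_{i−1}`, `N'|_M = N`, `N'(e_i) = e_{i+1}` (`N'(e_{m+1})=0`).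
Then `(M', φ', N')` is a `(φ,N)`-module, `M` is a `(φ,N)`-submodule,
`(p·φ' − 1)(e₁) = x`, and the quotient `M'/M` has basis `ē₁, …, ē_{m+1}` with
`φ̄(ē_i) = p^{−i}·ē_i` and `N̄(ē_i) = ē_{i+1}`.

Below we index the `e_i` by `j : Fin (m+1)`, with `e_j` corresponding to `e_{j+1}`, so
`eb j = (0, Pi.single j 1)`, `φ'(eb j) = p^{−(j+1)}·(eb j) + p^{−(j+1)}·x_j` and
`N'(eb j) = eb (j+1)`.
-/

/-!
Everything follows from coordinate formulas for `φ'` and `N'` on `M' = M × ℚ_p^{m+1}`.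

* `φ'` is block triangular with invertible diagonal blocks `φ` and `diag(p^{-(j+1)})`, hence
  injective, hence bijective because `M'` is finite-dimensional.
* `N'` is `N` on the first factor and the coordinate shift on the second; the `k`-th power of the
  shift kills the first `k` coordinates, so `N'` is nilpotent.
* In `N' φ' = p φ' N'`, the contributions of the `x_j` to the `M`-component are
  `Σ_j p^{-(j+1)} a_j x_{j+1}` on the left and the same sum without the term `j = m` on the right;
  the two agree because `x_{m+1} = N^{m+1}(x) = 0`.
* The projection `M' → ℚ_p^{m+1}` factors through `M'/M` and sends the classes of the `e_j` to the
  standard basis, which gives the assertions about the quotient.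
-/

open LinearMap Submodule

section

variable (p : ℕ) [Fact p.Prime]
variable {M : Type*} [AddCommGroup M] [Module ℚ_[p] M]

/-- `φ' : M' → M'`, `φ'(v, a) = (φ v + Σ_j p^{-(j+1)} a_j x_j, (p^{-(j+1)} a_j)_j)`. -/
noncomputable def phiEff (φ N : M →ₗ[ℚ_[p]] M) (x : M) (m : ℕ) :
    M × (Fin (m + 1) → ℚ_[p]) →ₗ[ℚ_[p]] M × (Fin (m + 1) → ℚ_[p]) :=
  LinearMap.prod
    (φ ∘ₗ LinearMap.fst ℚ_[p] M (Fin (m + 1) → ℚ_[p]) +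
      ∑ j : Fin (m + 1), ((p : ℚ_[p])⁻¹ ^ ((j : ℕ) + 1)) •
        ((LinearMap.proj j ∘ₗ LinearMap.snd ℚ_[p] M (Fin (m + 1) → ℚ_[p])).smulRight
          ((N ^ (j : ℕ)) x)))
    (LinearMap.pi fun j => ((p : ℚ_[p])⁻¹ ^ ((j : ℕ) + 1)) •
      (LinearMap.proj j ∘ₗ LinearMap.snd ℚ_[p] M (Fin (m + 1) → ℚ_[p])))

/-- `N' : M' → M'`, `N'(v, a) = (N v, shift a)` where `shift` realizes `e_j ↦ e_{j+1}`. -/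
noncomputable def nEff (N : M →ₗ[ℚ_[p]] M) (m : ℕ) :
    M × (Fin (m + 1) → ℚ_[p]) →ₗ[ℚ_[p]] M × (Fin (m + 1) → ℚ_[p]) :=
  LinearMap.prod
    (N ∘ₗ LinearMap.fst ℚ_[p] M (Fin (m + 1) → ℚ_[p]))
    (LinearMap.pi fun k =>
      (Fin.cases (motive := fun _ => (Fin (m + 1) → ℚ_[p]) →ₗ[ℚ_[p]] ℚ_[p])
          0 (fun k' => LinearMap.proj k'.castSucc) k) ∘ₗ
        LinearMap.snd ℚ_[p] M (Fin (m + 1) → ℚ_[p]))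

/-- The elements `e_1, …, e_{m+1}` of `M'`, indexed by `Fin (m+1)`. -/
noncomputable def eb {m : ℕ} (j : Fin (m + 1)) : M × (Fin (m + 1) → ℚ_[p]) :=
  (0, Pi.single j 1)

theorem phiEff_fst (φ N : M →ₗ[ℚ_[p]] M) (x : M) (m : ℕ) (w : M × (Fin (m + 1) → ℚ_[p])) :
    (phiEff p φ N x m w).1 =
      φ w.1 + ∑ j : Fin (m + 1), ((p : ℚ_[p])⁻¹ ^ ((j : ℕ) + 1)) • w.2 j • (N ^ (j : ℕ)) x := by
  simp [phiEff, LinearMap.sum_apply]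

theorem phiEff_snd (φ N : M →ₗ[ℚ_[p]] M) (x : M) (m : ℕ) (w : M × (Fin (m + 1) → ℚ_[p]))
    (j : Fin (m + 1)) :
    (phiEff p φ N x m w).2 j = (p : ℚ_[p])⁻¹ ^ ((j : ℕ) + 1) * w.2 j := by
  simp [phiEff]

theorem nEff_fst (N : M →ₗ[ℚ_[p]] M) (m : ℕ) (w : M × (Fin (m + 1) → ℚ_[p])) :
    (nEff p N m w).1 = N w.1 := by
  simp [nEff]

theorem nEff_snd_zero (N : M →ₗ[ℚ_[p]] M) (m : ℕ) (w : M × (Fin (m + 1) → ℚ_[p])) :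
    (nEff p N m w).2 0 = 0 := by
  simp [nEff]

theorem nEff_snd_succ (N : M →ₗ[ℚ_[p]] M) (m : ℕ) (w : M × (Fin (m + 1) → ℚ_[p])) (j : Fin m) :
    (nEff p N m w).2 j.succ = w.2 j.castSucc := by
  simp [nEff]

theorem phiEff_injective {φ : M →ₗ[ℚ_[p]] M} (hφ : Function.Injective φ) (N : M →ₗ[ℚ_[p]] M)
    (x : M) (m : ℕ) : Function.Injective (phiEff p φ N x m) := by
  have hp : (p : ℚ_[p]) ≠ 0 := by exact_mod_cast (Fact.out : p.Prime).ne_zero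
  rw [injective_iff_map_eq_zero]
  intro w hw
  have h2 : w.2 = 0 := by
    funext j
    have h := phiEff_snd p φ N x m w j
    rw [hw] at h
    simpa [hp] using h.symm
  have h1 : w.1 = 0 := by
    have h := phiEff_fst p φ N x m w
    rw [hw, h2] at h
    exact (map_eq_zero_iff φ hφ).1 (by simpa using h.symm)
  exact Prod.ext h1 h2

theorem nEff_pow_fst (N : M →ₗ[ℚ_[p]] M) (m k : ℕ) (w : M × (Fin (m + 1) → ℚ_[p])) :
    ((nEff p N m ^ k) w).1 = (N ^ k) w.1 := by
  induction k with
  | zero => simp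
  | succ k ih => rw [pow_succ', pow_succ', Module.End.mul_apply, nEff_fst, ih, Module.End.mul_apply]

theorem nEff_pow_snd_eq_zero (N : M →ₗ[ℚ_[p]] M) (m k : ℕ) (w : M × (Fin (m + 1) → ℚ_[p]))
    (j : Fin (m + 1)) (hj : (j : ℕ) < k) : ((nEff p N m ^ k) w).2 j = 0 := by
  induction k generalizing j with
  | zero => omega
  | succ k ih =>
    rw [pow_succ', Module.End.mul_apply]
    refine Fin.cases (fun _ => nEff_snd_zero p N m _) (fun i hi => ?_) j hj
    rw [nEff_snd_succ]
    exact ih _ (by simpa using hi)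

theorem nEff_isNilpotent {N : M →ₗ[ℚ_[p]] M} (hN : IsNilpotent N) (m : ℕ) :
    IsNilpotent (nEff p N m) := by
  obtain ⟨n, hn⟩ := hN
  refine ⟨n + (m + 1), LinearMap.ext fun w => Prod.ext ?_ (funext fun j => ?_)⟩
  · rw [nEff_pow_fst, pow_add, hn]
    simp
  · exact nEff_pow_snd_eq_zero p N m _ w j (by omega)

theorem nEff_comp_phiEff {φ N : M →ₗ[ℚ_[p]] M} (hrel : N ∘ₗ φ = (p : ℚ_[p]) • (φ ∘ₗ N))
    (x : M) (m : ℕ) (hx : (N ^ (m + 1)) x = 0) :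
    nEff p N m ∘ₗ phiEff p φ N x m = (p : ℚ_[p]) • (phiEff p φ N x m ∘ₗ nEff p N m) := by
  have hp : (p : ℚ_[p]) ≠ 0 := by exact_mod_cast (Fact.out : p.Prime).ne_zero
  have hpow (k : ℕ) : (p : ℚ_[p]) * (p : ℚ_[p])⁻¹ ^ (k + 1) = (p : ℚ_[p])⁻¹ ^ k := by
    rw [pow_succ', mul_inv_cancel_left₀ hp]
  have hr (v : M) : N (φ v) = (p : ℚ_[p]) • φ (N v) := LinearMap.congr_fun hrel v
  have hN (k : ℕ) : N ((N ^ k) x) = (N ^ (k + 1)) x := by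
    rw [pow_succ', Module.End.mul_apply]
  refine LinearMap.ext fun w => Prod.ext ?_ (funext fun j => ?_)
  · simp only [LinearMap.comp_apply, LinearMap.smul_apply, Prod.smul_fst, nEff_fst, phiEff_fst,
      map_add, map_sum, map_smul, hr, smul_add, hN]
    congr 1
    -- Drop the last term on the left (it is a multiple of `x_{m+1} = 0`) and the first one on the
    -- right (the shifted vector has vanishing first coordinate).
    rw [Fin.sum_univ_castSucc, Fin.sum_univ_succ]
    simp only [Fin.val_last, hx, nEff_snd_zero, nEff_snd_succ, smul_zero, zero_smul, add_zero,
      zero_add, Finset.smul_sum]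
    refine Finset.sum_congr rfl fun j _ => ?_
    rw [smul_smul (p : ℚ_[p]), hpow]
    simp
  · simp only [LinearMap.comp_apply, LinearMap.smul_apply, Prod.smul_snd, Pi.smul_apply,
      smul_eq_mul, phiEff_snd]
    refine Fin.cases ?_ (fun i => ?_) j
    · simp [nEff_snd_zero]
    · rw [nEff_snd_succ, nEff_snd_succ, phiEff_snd, ← mul_assoc, hpow]
      simp

theorem phiEff_inl (φ N : M →ₗ[ℚ_[p]] M) (x : M) (m : ℕ) (v : M) :
    phiEff p φ N x m (v, 0) = (φ v, 0) :=
  Prod.ext (by simp [phiEff_fst]) (funext fun j => by simp [phiEff_snd])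

theorem nEff_inl (N : M →ₗ[ℚ_[p]] M) (m : ℕ) (v : M) : nEff p N m (v, 0) = (N v, 0) :=
  Prod.ext (nEff_fst p N m _) (funext fun j =>
    Fin.cases (nEff_snd_zero p N m _) (fun i => nEff_snd_succ p N m _ i) j)

theorem phiEff_eb (φ N : M →ₗ[ℚ_[p]] M) (x : M) (m : ℕ) (j : Fin (m + 1)) :
    phiEff p φ N x m (eb p j) =
      ((p : ℚ_[p])⁻¹ ^ ((j : ℕ) + 1)) • ((N ^ (j : ℕ)) x, Pi.single j 1) := by
  refine Prod.ext ?_ (funext fun i => ?_)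
  · rw [phiEff_fst, Finset.sum_eq_single j]
    · simp [eb]
    · intro i _ hi
      simp [eb, hi]
    · simp
  · rw [phiEff_snd]
    rcases eq_or_ne i j with rfl | h
    · simp [eb]
    · simp [eb, h]

theorem nEff_eb_castSucc (N : M →ₗ[ℚ_[p]] M) (m : ℕ) (j : Fin m) :
    nEff p N m (eb p j.castSucc) = eb p j.succ := by
  refine Prod.ext (by simp [nEff_fst, eb]) (funext fun i => ?_)
  refine Fin.cases ?_ (fun i => ?_) i
  · simp [nEff_snd_zero, eb, (Fin.succ_ne_zero j).symm]
  · simp [nEff_snd_succ, eb, Pi.single_apply]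

theorem nEff_eb_last (N : M →ₗ[ℚ_[p]] M) (m : ℕ) :
    nEff p N m (eb p (Fin.last m)) = 0 := by
  refine Prod.ext (by simp [nEff_fst, eb]) (funext fun i => ?_)
  refine Fin.cases ?_ (fun i => ?_) i
  · simp [nEff_snd_zero]
  · simp [nEff_snd_succ, eb, Fin.castSucc_ne_last]

/-- Two elements of `M'` agree modulo `M` as soon as their `ℚ_p^{m+1}`-components agree. -/
theorem mkQ_range_inl_eq {m : ℕ} {w w' : M × (Fin (m + 1) → ℚ_[p])} (h : w.2 = w'.2) :
    (LinearMap.range (LinearMap.inl ℚ_[p] M (Fin (m + 1) → ℚ_[p]))).mkQ w =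
      (LinearMap.range (LinearMap.inl ℚ_[p] M (Fin (m + 1) → ℚ_[p]))).mkQ w' := by
  rw [Submodule.mkQ_apply, Submodule.mkQ_apply, Submodule.Quotient.eq]
  exact ⟨w.1 - w'.1, Prod.ext (by simp) (by simp [h])⟩

theorem linearIndependent_mkQ_eb (m : ℕ) :
    LinearIndependent ℚ_[p] fun j : Fin (m + 1) =>
      (LinearMap.range (LinearMap.inl ℚ_[p] M (Fin (m + 1) → ℚ_[p]))).mkQ (eb p j) := by
  -- The projection to `ℚ_p^{m+1}` descends to the quotient and maps `ē_j` to the standard basis.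
  refine LinearIndependent.of_comp
    ((LinearMap.range (LinearMap.inl ℚ_[p] M (Fin (m + 1) → ℚ_[p]))).liftQ
      (LinearMap.snd ℚ_[p] M (Fin (m + 1) → ℚ_[p])) ?_) ?_
  · rintro _ ⟨v, rfl⟩
    simp
  · convert (Pi.basisFun ℚ_[p] (Fin (m + 1))).linearIndependent using 1
    · funext j
      simp [eb]
    · rfl

theorem span_mkQ_eb (m : ℕ) :
    Submodule.span ℚ_[p] (Set.range fun j : Fin (m + 1) =>
      (LinearMap.range (LinearMap.inl ℚ_[p] M (Fin (m + 1) → ℚ_[p]))).mkQ (eb p j)) = ⊤ := by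
  rw [eq_top_iff]
  rintro y -
  obtain ⟨w, rfl⟩ := Submodule.mkQ_surjective _ y
  have h : (LinearMap.range (LinearMap.inl ℚ_[p] M (Fin (m + 1) → ℚ_[p]))).mkQ w =
      (LinearMap.range (LinearMap.inl ℚ_[p] M (Fin (m + 1) → ℚ_[p]))).mkQ
        (∑ j, w.2 j • eb p j) := by
    refine mkQ_range_inl_eq p (funext fun i => ?_)
    simp [eb, Prod.snd_sum, Finset.sum_apply, Pi.single_apply]
  rw [h, map_sum]
  refine Submodule.sum_mem _ fun j _ => ?_
  rw [map_smul]
  exact Submodule.smul_mem _ _ (Submodule.subset_span ⟨j, rfl⟩)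

theorem benois_effaceability_construction
    [FiniteDimensional ℚ_[p] M]
    (φ N : M →ₗ[ℚ_[p]] M)
    (hφ : Function.Bijective φ) (hNnilp : IsNilpotent N)
    (hrel : N ∘ₗ φ = (p : ℚ_[p]) • (φ ∘ₗ N))
    (x : M) (m : ℕ) (hx : (N ^ (m + 1)) x = 0) :
    -- `(M', φ', N')` is a `(φ,N)`-module over `ℚ_p`
    Function.Bijective (phiEff p φ N x m) ∧
    IsNilpotent (nEff p N m) ∧
    nEff p N m ∘ₗ phiEff p φ N x m = (p : ℚ_[p]) • (phiEff p φ N x m ∘ₗ nEff p N m) ∧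
    -- `M` is a `(φ,N)`-submodule of `M'`, on which `φ'`, `N'` restrict to `φ`, `N`
    (∀ v : M, phiEff p φ N x m (v, 0) = (φ v, 0)) ∧
    (∀ v : M, nEff p N m (v, 0) = (N v, 0)) ∧
    (LinearMap.range (LinearMap.inl ℚ_[p] M (Fin (m + 1) → ℚ_[p]))).map (phiEff p φ N x m) ≤
      LinearMap.range (LinearMap.inl ℚ_[p] M (Fin (m + 1) → ℚ_[p])) ∧
    (LinearMap.range (LinearMap.inl ℚ_[p] M (Fin (m + 1) → ℚ_[p]))).map (nEff p N m) ≤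
      LinearMap.range (LinearMap.inl ℚ_[p] M (Fin (m + 1) → ℚ_[p])) ∧
    -- `(p·φ' − 1)(e₁) = x`
    ((p : ℚ_[p]) • phiEff p φ N x m (eb p 0) - eb p 0 = ((x, 0) : M × (Fin (m + 1) → ℚ_[p]))) ∧
    -- the images `ē_j` form a basis of `M'/M` on which `φ̄(ē_j) = p^{−(j+1)}·ē_j`
    -- and `N̄(ē_j) = ē_{j+1}` (with `ē_{m+2} = 0`)
    (LinearIndependent ℚ_[p] fun j : Fin (m + 1) =>
      (LinearMap.range (LinearMap.inl ℚ_[p] M (Fin (m + 1) → ℚ_[p]))).mkQ (eb p j)) ∧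
    (Submodule.span ℚ_[p] (Set.range fun j : Fin (m + 1) =>
      (LinearMap.range (LinearMap.inl ℚ_[p] M (Fin (m + 1) → ℚ_[p]))).mkQ (eb p j)) = ⊤) ∧
    (∀ j : Fin (m + 1),
      (LinearMap.range (LinearMap.inl ℚ_[p] M (Fin (m + 1) → ℚ_[p]))).mkQ
          (phiEff p φ N x m (eb p j)) =
        ((p : ℚ_[p])⁻¹ ^ ((j : ℕ) + 1)) •
          (LinearMap.range (LinearMap.inl ℚ_[p] M (Fin (m + 1) → ℚ_[p]))).mkQ (eb p j)) ∧
    (∀ j : Fin m,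
      (LinearMap.range (LinearMap.inl ℚ_[p] M (Fin (m + 1) → ℚ_[p]))).mkQ
          (nEff p N m (eb p j.castSucc)) =
        (LinearMap.range (LinearMap.inl ℚ_[p] M (Fin (m + 1) → ℚ_[p]))).mkQ (eb p j.succ)) ∧
    ((LinearMap.range (LinearMap.inl ℚ_[p] M (Fin (m + 1) → ℚ_[p]))).mkQ
        (nEff p N m (eb p (Fin.last m))) = 0) := by
  have hp : (p : ℚ_[p]) ≠ 0 := by exact_mod_cast (Fact.out : p.Prime).ne_zero
  have hinj := phiEff_injective p hφ.injective N x m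
  refine ⟨⟨hinj, LinearMap.injective_iff_surjective.1 hinj⟩, nEff_isNilpotent p hNnilp m,
    nEff_comp_phiEff p hrel x m hx, phiEff_inl p φ N x m, nEff_inl p N m, ?_, ?_, ?_,
    linearIndependent_mkQ_eb p m, span_mkQ_eb p m, fun j => ?_, fun j => ?_, ?_⟩
  · rintro _ ⟨_, ⟨v, rfl⟩, rfl⟩
    exact ⟨φ v, (phiEff_inl p φ N x m v).symm⟩
  · rintro _ ⟨_, ⟨v, rfl⟩, rfl⟩
    exact ⟨N v, (nEff_inl p N m v).symm⟩
  · rw [phiEff_eb]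
    simp [eb, hp]
  · rw [phiEff_eb, ← map_smul]
    exact mkQ_range_inl_eq p (by simp [eb])
  · rw [nEff_eb_castSucc]
  · rw [nEff_eb_last, map_zero]

end
end

section
/- Let p be a prime. In the field ℚ_p((π)) of formal Laurent series over ℚ_p, let ∂ be the derivation ∂(f) = (1+π)·(df/dπ), and let t = log(1+π) = Σ_{n≥1} (−1)^{n−1}·πⁿ/n ∈ ℚ_p[[π]], which is invertible in ℚ_p((π)) since its lowest-order term is π. Then for every integer m ≥ 1, ∂^{m−1}(π^{−1} + 1/2) − (−1)^{m−1}·(m−1)!·t^{−m} lies in ℚ_p[[π]]. (This congruence modulo ℚ_p[[π]] is the key identity in the proof of Proposition 1.5.8(i).) -/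
/-!
Write `t = π * u` with `u` a power series of constant term `1`; then `1 - u⁻¹` is divisible by `π`,
so `π⁻¹ - t⁻¹ = π⁻¹ * (1 - u⁻¹)` is a power series (`exists_piL_inv_sub_tL_inv`), which is the
case `m = 1` up to the constant `1/2`. The general case follows by applying `∂` repeatedly: it is a derivation
(`delL_mul`) which preserves power series (`delL_ofPowerSeries`) and satisfies `∂ t = 1`
(`delL_tL`), hence `∂ (t⁻¹ ^ m) = -m * t⁻¹ ^ (m + 1)`
(`delL_tL_inv_pow`).
-/

/-!
Statement 9 (the key identity in the proof of Proposition 1.5.8(i) of Benois).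

In `ℚ_p((π))`, with `∂ = (1+π)·d/dπ` and `t = log(1+π) = Σ_{n≥1} (−1)^{n−1} πⁿ/n`, for
every `m ≥ 1` the element `∂^{m−1}(π⁻¹ + 1/2) − (−1)^{m−1}·(m−1)!·t^{−m}` lies in
`ℚ_p[[π]]`.
-/

open scoped Classical Pointwise

section

variable (p : ℕ) [Fact p.Prime]

/-- The derivative `d/dπ` on formal Laurent series: `(d f)ₙ = (n+1)·f_{n+1}`. -/
noncomputable def lDeriv (f : LaurentSeries ℚ_[p]) : LaurentSeries ℚ_[p] where
  coeff := fun n => (n + 1 : ℤ) • f.coeff (n + 1)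
  isPWO_support' := by
    have hsub : (Function.support fun n : ℤ => (n + 1 : ℤ) • f.coeff (n + 1)) ⊆
        Function.support f.coeff + ({-1} : Set ℤ) := by
      intro n hn
      have hf : f.coeff (n + 1) ≠ 0 := by
        intro h0
        exact hn (by simp [Function.mem_support, h0])
      have : (n + 1) + (-1) ∈ Function.support f.coeff + ({-1} : Set ℤ) :=
        Set.add_mem_add hf rfl
      simpa using this
    exact (f.isPWO_support'.add ((Set.finite_singleton (-1 : ℤ)).isPWO)).mono hsub

/-- The variable `π` of `ℚ_p((π))`. -/
noncomputable def piL : LaurentSeries ℚ_[p] := HahnSeries.single (1 : ℤ) (1 : ℚ_[p])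

/-- The operator `∂ = (1 + π)·d/dπ` on `ℚ_p((π))`. -/
noncomputable def delL (f : LaurentSeries ℚ_[p]) : LaurentSeries ℚ_[p] :=
  (1 + piL p) * lDeriv p f

/-- `t = log(1+π) = Σ_{n≥1} (−1)^{n−1}·πⁿ/n ∈ ℚ_p[[π]] ⊆ ℚ_p((π))`. -/
noncomputable def tL : LaurentSeries ℚ_[p] :=
  HahnSeries.ofPowerSeries ℤ ℚ_[p]
    (PowerSeries.mk fun n => if n = 0 then 0 else (-1 : ℚ_[p]) ^ (n - 1) / (n : ℚ_[p]))

lemma lDeriv_add (f g : LaurentSeries ℚ_[p]) :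
    lDeriv p (f + g) = lDeriv p f + lDeriv p g := by
  ext n
  simp [lDeriv]

lemma lDeriv_smul (c : ℚ_[p]) (f : LaurentSeries ℚ_[p]) :
    lDeriv p (c • f) = c • lDeriv p f := by
  ext n
  simp [lDeriv]
  ring

/-- The derivation `d/dπ` of Laurent series restricts to `d/dX` on power series. -/
lemma lDeriv_ofPowerSeries (f : PowerSeries ℚ_[p]) :
    lDeriv p (HahnSeries.ofPowerSeries ℤ ℚ_[p] f) =
      HahnSeries.ofPowerSeries ℤ ℚ_[p] (PowerSeries.derivative ℚ_[p] f) := by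
  ext n
  simp only [lDeriv, PowerSeries.coeff_coe]
  rcases lt_trichotomy n (-1) with h | rfl | h
  · rw [if_pos (by omega), if_pos (by omega), smul_zero]
  · simp
  · lift n to ℕ using by omega
    rw [if_neg (by omega), if_neg (by omega), PowerSeries.coeff_derivative]
    have : ((n : ℤ) + 1).natAbs = n + 1 := by omega
    simp [this, mul_comm]

/-- The Leibniz rule in the special case where one factor is a power of `π`. -/
lemma lDeriv_single_mul (a : ℤ) (f : LaurentSeries ℚ_[p]) :
    lDeriv p (HahnSeries.single a 1 * f) =
      HahnSeries.single (a - 1) (a : ℚ_[p]) * f + HahnSeries.single a 1 * lDeriv p f := by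
  ext n
  simp only [lDeriv, HahnSeries.coeff_add, HahnSeries.coeff_single_mul]
  rw [show n - (a - 1) = n + 1 - a by ring, show n - a + 1 = n + 1 - a by ring]
  simp only [zsmul_eq_mul]
  push_cast
  ring

/-- The Leibniz rule, obtained from the one for power series by writing each factor as a power
of `π` times a power series. -/
lemma lDeriv_mul (f g : LaurentSeries ℚ_[p]) :
    lDeriv p (f * g) = f * lDeriv p g + g * lDeriv p f := by
  rw [← LaurentSeries.single_order_mul_powerSeriesPart f,
    ← LaurentSeries.single_order_mul_powerSeriesPart g]
  generalize f.order = a, f.powerSeriesPart = F, g.order = b, g.powerSeriesPart = G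
  rw [mul_mul_mul_comm, HahnSeries.single_mul_single, one_mul, ← map_mul, lDeriv_single_mul,
    lDeriv_single_mul, lDeriv_single_mul, lDeriv_ofPowerSeries, lDeriv_ofPowerSeries,
    lDeriv_ofPowerSeries, Derivation.leibniz]
  have h1 : (HahnSeries.single (a + b) (1 : ℚ_[p])) =
      HahnSeries.single a 1 * HahnSeries.single b 1 := by
    rw [HahnSeries.single_mul_single, one_mul]
  have h2 : (HahnSeries.single (a + b - 1) ((a + b : ℤ) : ℚ_[p])) =
      HahnSeries.single (a - 1) (a : ℚ_[p]) * HahnSeries.single b 1 +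
      HahnSeries.single a 1 * HahnSeries.single (b - 1) (b : ℚ_[p]) := by
    rw [HahnSeries.single_mul_single, HahnSeries.single_mul_single,
      show a - 1 + b = a + b - 1 by ring, show a + (b - 1) = a + b - 1 by ring,
      ← HahnSeries.single_add, mul_one, one_mul, Int.cast_add]
  rw [h1, h2]
  simp only [smul_eq_mul, map_add, map_mul]
  ring

lemma delL_sub (f g : LaurentSeries ℚ_[p]) : delL p (f - g) = delL p f - delL p g := by
  rw [eq_sub_iff_add_eq, delL, delL, delL, ← mul_add, ← lDeriv_add, sub_add_cancel]

lemma delL_C_mul (c : ℚ_[p]) (f : LaurentSeries ℚ_[p]) :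
    delL p (HahnSeries.C c * f) = HahnSeries.C c * delL p f := by
  rw [delL, delL, HahnSeries.C_mul_eq_smul, lDeriv_smul, ← HahnSeries.C_mul_eq_smul,
    mul_left_comm]

lemma delL_mul (f g : LaurentSeries ℚ_[p]) :
    delL p (f * g) = f * delL p g + g * delL p f := by
  simp only [delL, lDeriv_mul]
  ring

lemma piL_eq : piL p = HahnSeries.ofPowerSeries ℤ ℚ_[p] PowerSeries.X :=
  HahnSeries.ofPowerSeries_X.symm

lemma piL_ne_zero : piL p ≠ 0 := HahnSeries.single_ne_zero one_ne_zero

lemma delL_ofPowerSeries (f : PowerSeries ℚ_[p]) :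
    delL p (HahnSeries.ofPowerSeries ℤ ℚ_[p] f) =
      HahnSeries.ofPowerSeries ℤ ℚ_[p] ((1 + PowerSeries.X) * PowerSeries.derivative ℚ_[p] f) := by
  rw [delL, lDeriv_ofPowerSeries, piL_eq, map_mul, map_add, map_one]

lemma delL_tL : delL p (tL p) = 1 := by
  rw [tL, delL_ofPowerSeries, ← map_one (HahnSeries.ofPowerSeries ℤ ℚ_[p])]
  congr 1
  -- The derivative of `log (1 + X)` is the geometric series `∑ (-X) ^ n`.
  have h : PowerSeries.derivative ℚ_[p] (PowerSeries.mk fun n =>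
      if n = 0 then 0 else (-1 : ℚ_[p]) ^ (n - 1) / (n : ℚ_[p])) =
      PowerSeries.mk fun n => (-1 : ℚ_[p]) ^ n := by
    ext n
    have : (n : ℚ_[p]) + 1 ≠ 0 := by exact_mod_cast n.succ_ne_zero
    simp [PowerSeries.coeff_derivative, this]
  rw [h]
  ext n
  cases n with
  | zero => simp [add_mul]
  | succ n => simp [add_mul, PowerSeries.coeff_succ_X_mul, PowerSeries.coeff_one, pow_succ]

lemma tL_ne_zero : tL p ≠ 0 := by
  intro h
  have h1 := delL_tL p
  have h0 := delL_sub p 0 0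
  rw [sub_zero, sub_self] at h0
  rw [h, h0] at h1
  exact zero_ne_one h1

lemma delL_tL_inv : delL p (tL p)⁻¹ = -((tL p)⁻¹ ^ 2) := by
  have h1 : delL p 1 = 0 := by simpa using delL_mul p 1 1
  have h := delL_mul p (tL p) (tL p)⁻¹
  rw [mul_inv_cancel₀ (tL_ne_zero p), h1, delL_tL] at h
  have ht := tL_ne_zero p
  apply mul_left_cancel₀ ht
  rw [eq_comm, mul_one] at h
  rw [eq_neg_of_add_eq_zero_left h]
  field_simp

lemma delL_tL_inv_pow (k : ℕ) :
    delL p ((tL p)⁻¹ ^ (k + 1)) = -((k + 1 : ℕ) * (tL p)⁻¹ ^ (k + 2)) := by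
  induction k with
  | zero => simpa using delL_tL_inv p
  | succ k ih =>
    rw [pow_succ, delL_mul, ih, delL_tL_inv]
    push_cast
    ring

/-- The case `m = 1`, up to the constant `1/2`: both `π` and `t` are uniformizers with the same leading coefficient, so
their inverses have the same polar part. -/
lemma exists_piL_inv_sub_tL_inv :
    ∃ g : PowerSeries ℚ_[p], (piL p)⁻¹ - (tL p)⁻¹ = HahnSeries.ofPowerSeries ℤ ℚ_[p] g := by
  let u : PowerSeries ℚ_[p] := PowerSeries.mk fun n => (-1 : ℚ_[p]) ^ n / ((n : ℚ_[p]) + 1)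
  have hu : PowerSeries.constantCoeff u = 1 := by
    simp [u, ← PowerSeries.coeff_zero_eq_constantCoeff_apply]
  have ht : tL p = piL p * HahnSeries.ofPowerSeries ℤ ℚ_[p] u := by
    rw [piL_eq, ← map_mul, tL]
    congr 1
    ext n
    cases n with
    | zero => simp
    | succ n => simp [u, PowerSeries.coeff_succ_X_mul]
  have huv : HahnSeries.ofPowerSeries ℤ ℚ_[p] u * HahnSeries.ofPowerSeries ℤ ℚ_[p] u⁻¹ = 1 := by
    rw [← map_mul, PowerSeries.mul_inv_cancel u (by simp [hu]), map_one]
  obtain ⟨w, hw⟩ : PowerSeries.X ∣ 1 - u⁻¹ := by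
    rw [PowerSeries.X_dvd_iff]
    simp [hu]
  have hw' := congrArg (HahnSeries.ofPowerSeries ℤ ℚ_[p]) hw
  rw [map_sub, map_one, map_mul, ← piL_eq] at hw'
  refine ⟨w, ?_⟩
  rw [ht, mul_inv, inv_eq_of_mul_eq_one_right huv, ← mul_one_sub, hw',
    inv_mul_cancel_left₀ (piL_ne_zero p)]

theorem benois_del_congruence (m : ℕ) (hm : 1 ≤ m) :
    ∃ g : PowerSeries ℚ_[p],
      (delL p)^[m - 1] ((piL p)⁻¹ + ((1 : ℚ_[p]) / 2) • (1 : LaurentSeries ℚ_[p])) -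
          ((-1 : ℚ_[p]) ^ (m - 1) * ((m - 1).factorial : ℚ_[p])) • ((tL p)⁻¹) ^ m =
        HahnSeries.ofPowerSeries ℤ ℚ_[p] g := by
  obtain ⟨k, rfl⟩ : ∃ k, m = k + 1 := ⟨m - 1, by omega⟩
  simp only [Nat.add_sub_cancel]
  clear hm
  induction k with
  | zero =>
    obtain ⟨g, hg⟩ := exists_piL_inv_sub_tL_inv p
    refine ⟨g + PowerSeries.C (1 / 2), ?_⟩
    rw [map_add, ← hg, HahnSeries.ofPowerSeries_C, ← mul_one (HahnSeries.C _),
      HahnSeries.C_mul_eq_smul]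
    simp only [Function.iterate_zero, id_eq, pow_zero, Nat.factorial_zero, Nat.cast_one, mul_one,
      one_smul, zero_add, pow_one]
    ring
  | succ k ih =>
    obtain ⟨g, hg⟩ := ih
    refine ⟨(1 + PowerSeries.X) * PowerSeries.derivative ℚ_[p] g, ?_⟩
    rw [← delL_ofPowerSeries, ← hg, Function.iterate_succ_apply', delL_sub]
    congr 1
    rw [← HahnSeries.C_mul_eq_smul, ← HahnSeries.C_mul_eq_smul, delL_C_mul, delL_tL_inv_pow,
      Nat.factorial_succ]
    simp only [map_mul, map_pow, map_neg, map_one, map_natCast]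
    push_cast
    ring

end
end
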